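/- Suppose g(r) = o(r^{-c}) as r → ∞ for some c > d. Let θ be the volume of the unit ball in ℝ^d and β := inf{x > 0 : x·g(α/(xθ)) > 1}. For γ > 0 define r̂_n(γ) := (γ log n/(α n))^{1/d}. Then for every γ > β, the probability that the graph G_n(r̂_n(γ)) is connected tends to 1 as n → ∞. -/

import Mathlib

open MeasureTheory ProbabilityTheory Filter Set

noncomputable section

namespace RCM

/-- The toroidal metric on the unit cube. -/
def torusDist {d : ℕ} (x y : EuclideanSpace ℝ (Fin d)) : ℝ :=
  ⨅ z : Fin d → ℤ, ‖x - y - (WithLp.equiv 2 (Fin d → ℝ)).symm (fun i => (z i : ℝ))‖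

/-- The half-open unit cube `S = (-1/2, 1/2]^d`. -/
def cube (d : ℕ) : Set (EuclideanSpace ℝ (Fin d)) :=
  {x | ∀ i, x i ∈ Set.Ioc (-(1/2) : ℝ) (1/2)}

/-- The random connection model: i.i.d. uniform points `X`, coupled Poisson counts `N`,
i.i.d. uniform edge variables `U`, with the three families mutually independent, and a
non-increasing connection function `g : [0,∞) → [0,1]` with finite positive integral `α`. -/
structure Model (d : ℕ) {Ω : Type*} [MeasurableSpace Ω] (P : Measure Ω) where
  g : ℝ → ℝ
  α : ℝ
  X : ℕ → Ω → EuclideanSpace ℝ (Fin d)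
  N : ℕ → Ω → ℕ
  U : ℕ → ℕ → Ω → ℝ
  g_antitone : AntitoneOn g (Set.Ici 0)
  g_mem : ∀ r : ℝ, 0 ≤ r → g r ∈ Set.Icc (0 : ℝ) 1
  g_integrable : MeasureTheory.Integrable (fun x : EuclideanSpace ℝ (Fin d) => g ‖x‖)
  α_def : α = ∫ x : EuclideanSpace ℝ (Fin d), g ‖x‖
  α_pos : 0 < α
  X_meas : ∀ i, Measurable (X i)
  X_unif : ∀ i : ℕ, 1 ≤ i → Measure.map (X i) P = volume.restrict (cube d)
  X_indep : iIndepFun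
    (fun i : {i : ℕ // 1 ≤ i} => X i) P
  N_meas : ∀ n, Measurable (N n)
  N_mono : ∀ ω, Monotone fun n => N n ω
  N_poisson : ∀ n k : ℕ,
    P {ω | N n ω = k} = ENNReal.ofReal (Real.exp (-(n : ℝ)) * (n : ℝ) ^ k / k.factorial)
  U_meas : ∀ i j, Measurable (U i j)
  U_unif : ∀ i j : ℕ, 1 ≤ i → i < j →
    Measure.map (U i j) P = volume.restrict (Set.Icc (0 : ℝ) 1)
  U_indep : iIndepFun
    (fun p : {p : ℕ × ℕ // 1 ≤ p.1 ∧ p.1 < p.2} => U p.1.1 p.1.2) P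
  families_indep : iIndep
    (![MeasurableSpace.comap (fun ω => fun i : ℕ => X i ω) inferInstance,
       MeasurableSpace.comap (fun ω => fun n : ℕ => N n ω) inferInstance,
       MeasurableSpace.comap (fun ω => fun p : ℕ × ℕ => U p.1 p.2 ω) inferInstance]) P

variable {d : ℕ} {Ω : Type*} [MeasurableSpace Ω] {P : Measure Ω}

/-- Adjacency in the graph `G_n(r)`: vertices `1 ≤ i,j ≤ N_n` are joined iff
`U_{ij} ≤ g(dist(X_i,X_j)/r)`. -/
def adj (M : Model d P) (n : ℕ) (r : ℝ) (ω : Ω) (i j : ℕ) : Prop :=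
  i ≠ j ∧ 1 ≤ i ∧ 1 ≤ j ∧ i ≤ M.N n ω ∧ j ≤ M.N n ω ∧
    M.U (min i j) (max i j) ω ≤ M.g (torusDist (M.X i ω) (M.X j ω) / r)

/-- The degree of vertex `i` in `G_n(r)`. -/
def deg (M : Model d P) (n : ℕ) (r : ℝ) (ω : Ω) (i : ℕ) : ℕ :=
  {j : ℕ | adj M n r ω i j}.ncard

/-- `W_n(r)`, the number of isolated vertices of `G_n(r)`. -/
def isolatedCount (M : Model d P) (n : ℕ) (r : ℝ) (ω : Ω) : ℕ :=
  {i : ℕ | 1 ≤ i ∧ i ≤ M.N n ω ∧ deg M n r ω i = 0}.ncard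

/-- `r̂_n(γ)` defined by `r̂_n(γ)^d = γ log n / (α n)`. -/
def rhat (M : Model d P) (γ : ℝ) (n : ℕ) : ℝ :=
  (γ * Real.log n / (M.α * n)) ^ ((1 : ℝ) / d)

/-- `d_n`, the critical parameter for absence of isolated nodes. -/
def critRadius (M : Model d P) (n : ℕ) (ω : Ω) : ℝ :=
  sInf {r : ℝ | 0 < r ∧ isolatedCount M n r ω = 0}

/-- The maximum vertex degree `Δ_n` of `G_n(r)`. -/
def maxDeg (M : Model d P) (n : ℕ) (r : ℝ) (ω : Ω) : ℕ :=
  (Finset.Icc 1 (M.N n ω)).sup (deg M n r ω)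

/-- The minimum vertex degree `δ_n` of `G_n(r)`. -/
def minDeg (M : Model d P) (n : ℕ) (r : ℝ) (ω : Ω) : ℕ :=
  sInf {k : ℕ | ∃ i, 1 ≤ i ∧ i ≤ M.N n ω ∧ deg M n r ω i = k}

/-- The length (toroidal metric) of the longest edge of `G_n(r)` (`0` if there are no edges). -/
def longestEdge (M : Model d P) (n : ℕ) (r : ℝ) (ω : Ω) : ℝ :=
  sSup ({0} ∪ {t : ℝ | ∃ i j, adj M n r ω i j ∧ t = torusDist (M.X i ω) (M.X j ω)})

/-- Connectivity of `G_n(r)`: any two vertices are joined by a path. -/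
def connectedGraph (M : Model d P) (n : ℕ) (r : ℝ) (ω : Ω) : Prop :=
  ∀ i j : ℕ, 1 ≤ i → i ≤ M.N n ω → 1 ≤ j → j ≤ M.N n ω →
    Relation.ReflTransGen (adj M n r ω) i j

/-- `H(x) = 1 - x + x log x` (with `H(0) = 1`, since `log 0 = 0` in Lean). -/
def H (x : ℝ) : ℝ := 1 - x + x * Real.log x

/-- The inverse of the restriction of `H` to `[1, ∞)`. -/
def Hplusinv (y : ℝ) : ℝ := sInf {x : ℝ | 1 ≤ x ∧ y ≤ H x}

/-- The inverse of the restriction of `H` to `[0, 1]`. -/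
def Hminusinv (y : ℝ) : ℝ := sInf {x : ℝ | 0 ≤ x ∧ H x ≤ y}

/-- The standard normal distribution function. -/
def stdNormalCDF (x : ℝ) : ℝ :=
  ∫ t in Set.Iic x, Real.exp (-t ^ 2 / 2) / Real.sqrt (2 * Real.pi)

/-!
Since `g ≤ 1`, the threshold is at least `1`, so it is enough to treat `γ > 1`.

Tile the torus by `q ^ d` cells of side about `η * rhat M γ n`, where `q` has no small prime
factor, and replace `g` by a smaller kernel of bounded range on `(ℤ/q)^d`. As `γ > 1`, for small
`η` the mass `σ` of this kernel off the origin still makes the expected number of neighbours of a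
vertex in other cells at least `(1 + ε) log n`. Apply the Cauchy–Davenport inequality to the
superlevel sets of the kernel: a bounded set of vertices in distinct cells has, in the cells it
does not occupy, at least as many expected neighbours as a single vertex. A union bound then shows
that with high probability every cluster meets many cells.

Call a cell bad if it contains no common neighbour of some two nearby vertices. With high
probability every window of bounded size contains boundedly many bad cells, and then all vertices
adjacent to segments of good cells lie in one cluster. In dimension at least two a cluster which
meets many cells must come close to such a segment.
-/

theorem measureReal_forall_exists_notMem {κ : Type*} [Fintype κ] {ι : κ → Type*}
    [∀ k, Fintype (ι k)] {β : ∀ k, ι k → Type*} [∀ k i, MeasurableSpace (β k i)]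
    {f : ∀ k (i : ι k), Ω → β k i} (hf : ∀ k i, Measurable (f k i))
    (hind : iIndepFun (fun p : Σ k, ι k => f p.1 p.2) P) {A : ∀ k (i : ι k), Set (β k i)}
    (hA : ∀ k i, MeasurableSet (A k i)) :
    P.real {ω | ∀ k, ∃ i, f k i ω ∉ A k i} = ∏ k, (1 - ∏ i, P.real (f k i ⁻¹' A k i)) := by
  have hP : IsProbabilityMeasure P := hind.isProbabilityMeasure
  let B : κ → Set Ω := fun k => ⋂ i, f k i ⁻¹' A k i
  have hBmeas : ∀ k, MeasurableSet (B k) := fun k =>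
    MeasurableSet.iInter fun i => hf k i (hA k i)
  have hPB : ∀ s : Finset κ, P (⋂ k ∈ s, B k) = ∏ k ∈ s, ∏ i, P (f k i ⁻¹' A k i) := fun s => by
    have h := hind.measure_inter_preimage_eq_mul (s.sigma fun _ => Finset.univ)
      (sets := fun p => A p.1 p.2) fun p _ => hA p.1 p.2
    rw [Finset.prod_sigma] at h
    rw [← h]
    congr 1
    ext ω
    simp only [B, Set.mem_iInter, Finset.mem_sigma, Finset.mem_univ, and_true, Sigma.forall]
    exact forall_congr' fun k => forall_comm
  have hPB' : ∀ k, P (B k) = ∏ i, P (f k i ⁻¹' A k i) := fun k => by simpa using hPB {k}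
  have hBind : iIndepSet B P := (iIndepSet_iff_meas_biInter hBmeas).2 fun s => by
    simp only [hPB, hPB']
  have hcompl := ((iIndepSet_iff_iIndep _ _).1 hBind).meas_iInter (s := fun k => (B k)ᶜ) fun k =>
    (MeasurableSpace.measurableSet_generateFrom (mem_singleton (B k))).compl
  have hset : {ω | ∀ k, ∃ i, f k i ω ∉ A k i} = ⋂ k, (B k)ᶜ := by
    ext ω
    simp [B]
  rw [hset, measureReal_def, hcompl, ENNReal.toReal_prod]
  refine Finset.prod_congr rfl fun k _ => ?_
  rw [← measureReal_def, probReal_compl_eq_one_sub (hBmeas k), measureReal_def, hPB',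
    ENNReal.toReal_prod]
  rfl

/-- The uniform variable of the unordered pair `{i, j}`. -/
def edgeVar (M : Model d P) (i j : ℕ) (ω : Ω) : ℝ := M.U (min i j) (max i j) ω

theorem measureReal_edgeVar_mem_Ico (M : Model d P) {i j : ℕ} (hi : 1 ≤ i) (hj : 1 ≤ j)
    (hij : i ≠ j) {t : ℝ} (ht : t ∈ Icc (0 : ℝ) 1) : P.real (edgeVar M i j ⁻¹' Ico 0 t) = t := by
  have hsub : Ico 0 t ⊆ Icc 0 1 := Ico_subset_Icc_self.trans (Icc_subset_Icc_right ht.2)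
  rw [measureReal_def]
  unfold edgeVar
  rw [← Measure.map_apply (M.U_meas _ _) measurableSet_Ico,
    M.U_unif _ _ (le_min hi hj) (min_lt_max.2 hij), Measure.restrict_apply measurableSet_Ico,
    inter_eq_left.2 hsub, Real.volume_Ico, sub_zero, ENNReal.toReal_ofReal ht.1]

theorem iIndepFun_edgeVar (M : Model d P) {ι : Type*} {i j : ι → ℕ} (hi : ∀ a, 1 ≤ i a)
    (hj : ∀ a, 1 ≤ j a) (hij : ∀ a, i a ≠ j a)
    (hinj : Function.Injective fun a => s(i a, j a)) :
    iIndepFun (fun a => edgeVar M (i a) (j a)) P := by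
  let e : ι → {p : ℕ × ℕ // 1 ≤ p.1 ∧ p.1 < p.2} := fun a =>
    ⟨(min (i a) (j a), max (i a) (j a)), le_min (hi a) (hj a), min_lt_max.2 (hij a)⟩
  refine M.U_indep.precomp (g := e) fun a b hab => hinj (Sym2.eq_iff.2 ?_)
  simp only [e, Subtype.mk.injEq, Prod.mk.injEq] at hab
  omega

theorem measureReal_forall_exists_edgeVar_notMem (M : Model d P) {κ : Type*} {s : Finset κ}
    {v : κ → ℕ} (hv : Function.Injective v) {R : Finset ℕ} (hs : ∀ x ∈ s, 1 ≤ v x ∧ v x ∉ R)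
    (hR : ∀ r ∈ R, 1 ≤ r) {τ : κ → Finset ℕ} (hτ : ∀ x ∈ s, τ x ⊆ R) {t : κ → ℕ → ℝ}
    (ht : ∀ x r, t x r ∈ Icc (0 : ℝ) 1) :
    P.real {ω | ∀ x ∈ s, ∃ r ∈ τ x, edgeVar M (v x) r ω ∉ Ico 0 (t x r)} =
      ∏ x ∈ s, (1 - ∏ r ∈ τ x, t x r) := by
  have hne : ∀ x ∈ s, ∀ r ∈ R, v x ≠ r := fun x hx r hr h => (hs x hx).2 (h ▸ hr)
  have hind : iIndepFun (fun p : Σ x : s, τ x => edgeVar M (v p.1) p.2) P :=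
    iIndepFun_edgeVar M (fun p => (hs _ p.1.2).1) (fun p => hR _ (hτ _ p.1.2 p.2.2))
      (fun p => hne _ p.1.2 _ (hτ _ p.1.2 p.2.2)) (by
        rintro ⟨⟨x, hx⟩, r, hr⟩ ⟨⟨y, hy⟩, u, hu⟩ h
        rcases Sym2.eq_iff.1 h with ⟨hxy, rfl⟩ | ⟨hxu, -⟩
        · obtain rfl := hv hxy
          rfl
        · exact (hne _ hx _ (hτ _ hy hu) hxu).elim)
  have h := measureReal_forall_exists_notMem
    (f := fun (x : s) (r : τ x) => edgeVar M (v x) r) (fun _ _ => M.U_meas _ _) hind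
    (A := fun x r => Ico 0 (t x r)) fun _ _ => measurableSet_Ico
  simp only [Subtype.forall, Subtype.exists, exists_prop] at h
  rw [← Finset.prod_coe_sort s, h]
  refine Finset.prod_congr rfl fun x _ => ?_
  rw [← Finset.prod_coe_sort (τ x)]
  congr 1
  exact Finset.prod_congr rfl fun r _ => measureReal_edgeVar_mem_Ico M (hs _ x.2).1
    (hR _ (hτ _ x.2 r.2)) (hne _ x.2 _ (hτ _ x.2 r.2)) (ht _ _)

theorem measureReal_count_points_edges (M : Model d P) {A : Set (ℕ → EuclideanSpace ℝ (Fin d))}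
    {B : Set (ℕ → ℕ)} {C : Set (ℕ × ℕ → ℝ)} (hA : MeasurableSet A) (hB : MeasurableSet B)
    (hC : MeasurableSet C) :
    P.real {ω | (fun n => M.N n ω) ∈ B ∧ (fun i => M.X i ω) ∈ A ∧
      (fun p : ℕ × ℕ => M.U p.1 p.2 ω) ∈ C} =
    P.real {ω | (fun n => M.N n ω) ∈ B} * (P.real {ω | (fun i => M.X i ω) ∈ A} *
      P.real {ω | (fun p : ℕ × ℕ => M.U p.1 p.2 ω) ∈ C}) := by
  have h := M.families_indep.meas_iInter (s := ![{ω | (fun i => M.X i ω) ∈ A},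
    {ω | (fun n => M.N n ω) ∈ B}, {ω | (fun p : ℕ × ℕ => M.U p.1 p.2 ω) ∈ C}]) fun i => by
      fin_cases i
      exacts [⟨A, hA, rfl⟩, ⟨B, hB, rfl⟩, ⟨C, hC, rfl⟩]
  have hset : {ω | (fun n => M.N n ω) ∈ B ∧ (fun i => M.X i ω) ∈ A ∧
      (fun p : ℕ × ℕ => M.U p.1 p.2 ω) ∈ C} = ⋂ i, ![{ω | (fun i => M.X i ω) ∈ A},
      {ω | (fun n => M.N n ω) ∈ B}, {ω | (fun p : ℕ × ℕ => M.U p.1 p.2 ω) ∈ C}] i := by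
    ext ω
    simp only [Set.mem_iInter, Fin.forall_fin_succ, Set.mem_ofPred_eq, Matrix.cons_val_zero,
      Matrix.cons_val_succ, IsEmpty.forall_iff, and_true]
    exact and_left_comm
  rw [measureReal_def, hset, h, Fin.prod_univ_three, ENNReal.toReal_mul, ENNReal.toReal_mul,
    mul_right_comm, mul_comm, ← mul_assoc, ← mul_assoc]
  rfl

section Labels

variable {Γ : Type*} [Fintype Γ] [MeasurableSpace Γ]

/-- A labelling of the points of space which cuts the unit cube into pieces of equal volume. -/
structure IsEquitable (L : EuclideanSpace ℝ (Fin d) → Γ) : Prop where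
  measurable : Measurable L
  volume_le : ∀ a, volume.real (L ⁻¹' {a} ∩ cube d) ≤ (Fintype.card Γ : ℝ)⁻¹

variable [MeasurableSingletonClass Γ] {L : EuclideanSpace ℝ (Fin d) → Γ}

theorem measureReal_forall_label_eq_le (M : Model d P) (hL : IsEquitable L) {V : Finset ℕ}
    (hV : ∀ i ∈ V, 1 ≤ i) (φ : V → Γ) :
    P.real {ω | ∀ i : V, L (M.X i ω) = φ i} ≤ (Fintype.card Γ : ℝ)⁻¹ ^ V.card := by
  have hind : iIndepFun (fun i : V => M.X i) P :=
    M.X_indep.precomp (g := fun i : V => ⟨i, hV i i.2⟩) fun i j h => by simpa using h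
  have h := hind.measure_inter_preimage_eq_mul Finset.univ (sets := fun i => L ⁻¹' {φ i})
    fun i _ => hL.measurable (measurableSet_singleton _)
  have hset : {ω | ∀ i : V, L (M.X i ω) = φ i} =
      ⋂ i ∈ (Finset.univ : Finset V), M.X i ⁻¹' (L ⁻¹' {φ i}) := by
    ext ω
    simp
  rw [hset, measureReal_def, h, ENNReal.toReal_prod]
  calc ∏ i : V, P.real (M.X i ⁻¹' (L ⁻¹' {φ i})) ≤ ∏ _i : V, (Fintype.card Γ : ℝ)⁻¹ := by
        refine Finset.prod_le_prod (fun _ _ => measureReal_nonneg) fun i _ => ?_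
        have hmeas : MeasurableSet (L ⁻¹' {φ i}) := hL.measurable (measurableSet_singleton _)
        rw [measureReal_def, ← Measure.map_apply (M.X_meas i) hmeas, M.X_unif i (hV i i.2),
          Measure.restrict_apply hmeas]
        exact hL.volume_le _
    _ = _ := by simp

theorem measureReal_labels_mem_edges_mem_le (M : Model d P) (hL : IsEquitable L) (n m : ℕ)
    {V : Finset ℕ} (hV : ∀ i ∈ V, 1 ≤ i) (Φ : Finset (V → Γ)) {C : (V → Γ) → Set (ℕ × ℕ → ℝ)}
    (hC : ∀ φ, MeasurableSet (C φ)) :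
    P.real {ω | M.N n ω = m ∧ (fun i : V => L (M.X i ω)) ∈ Φ ∧
      (fun p : ℕ × ℕ => M.U p.1 p.2 ω) ∈ C fun i : V => L (M.X i ω)} ≤
    P.real {ω | M.N n ω = m} * ((Fintype.card Γ : ℝ)⁻¹ ^ V.card *
      ∑ φ ∈ Φ, P.real {ω | (fun p : ℕ × ℕ => M.U p.1 p.2 ω) ∈ C φ}) := by
  have hP : IsProbabilityMeasure P := M.U_indep.isProbabilityMeasure
  let A : (V → Γ) → Set (ℕ → EuclideanSpace ℝ (Fin d)) := fun φ => {v | ∀ i : V, L (v i) = φ i}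
  let E : (V → Γ) → Set Ω := fun φ => {ω | (fun n => M.N n ω) ∈ {v : ℕ → ℕ | v n = m} ∧
    (fun i => M.X i ω) ∈ A φ ∧ (fun p : ℕ × ℕ => M.U p.1 p.2 ω) ∈ C φ}
  have hA : ∀ φ, MeasurableSet (A φ) := fun φ => by
    simp only [A, Set.ofPred_forall]
    exact MeasurableSet.iInter fun i =>
      measurableSet_eq_fun (hL.measurable.comp (measurable_pi_apply i.1)) measurable_const
  have hB : MeasurableSet {v : ℕ → ℕ | v n = m} :=
    measurableSet_eq_fun (measurable_pi_apply n) measurable_const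
  have hE : ∀ φ, P.real (E φ) ≤ P.real {ω | M.N n ω = m} * ((Fintype.card Γ : ℝ)⁻¹ ^ V.card *
      P.real {ω | (fun p : ℕ × ℕ => M.U p.1 p.2 ω) ∈ C φ}) := fun φ => by
    rw [measureReal_count_points_edges M (hA φ) hB (hC φ)]
    exact mul_le_mul_of_nonneg_left (mul_le_mul_of_nonneg_right
      (measureReal_forall_label_eq_le M hL hV φ) measureReal_nonneg) measureReal_nonneg
  calc _ ≤ P.real (⋃ φ ∈ Φ, E φ) := by
        refine measureReal_mono (fun ω hω => ?_) (measure_ne_top _ _)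
        exact Set.mem_biUnion (x := fun i : V => L (M.X i ω)) hω.2.1
          ⟨hω.1, fun _ => rfl, hω.2.2⟩
    _ ≤ ∑ φ ∈ Φ, P.real (E φ) := measureReal_biUnion_finset_le _ _
    _ ≤ _ := Finset.sum_le_sum fun φ _ => hE φ
    _ = _ := by rw [← Finset.mul_sum, ← Finset.mul_sum]

end Labels

theorem sum_piFinset_prod_one_sub {Γ : Type*} [Fintype Γ] {V R : Finset ℕ} (hR : R ⊆ V)
    (ψ : ℕ → Γ) (h : Γ → ℝ) :
    ∑ φ ∈ Fintype.piFinset fun x : V => if x.1 ∈ R then {ψ x} else Finset.univ,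
      ∏ x : V, (if x.1 ∈ R then 1 else 1 - h (φ x)) =
    (Fintype.card Γ - ∑ y, h y) ^ (V.card - R.card) := by
  rw [← Finset.prod_univ_sum (fun x : V => if x.1 ∈ R then {ψ x} else Finset.univ)
    fun x y => if x.1 ∈ R then 1 else 1 - h y]
  have hfactor : ∀ x : V, (∑ y ∈ if x.1 ∈ R then {ψ x} else Finset.univ,
      if x.1 ∈ R then 1 else 1 - h y) = if x.1 ∈ R then 1 else Fintype.card Γ - ∑ y, h y :=
    fun x => by split_ifs <;> simp
  rw [Finset.prod_congr rfl fun x _ => hfactor x,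
    Finset.prod_coe_sort V fun x => if x ∈ R then 1 else Fintype.card Γ - ∑ y, h y,
    Finset.prod_ite, Finset.prod_const_one, one_mul, Finset.prod_const, ← Finset.sdiff_eq_filter,
    Finset.card_sdiff_of_subset hR]

section NoHit

variable {Γ : Type*}

/-- No vertex outside `R` with label `y ∈ Y` has the edge variables towards all the vertices of
`τ y` below the thresholds `t y`. Thresholds are tested with `Ico 0 _`, so that a zero threshold is
never met. -/
def NoHit (M : Model d P) (L : EuclideanSpace ℝ (Fin d) → Γ) (m : ℕ) (R : Finset ℕ)
    (Y : Finset Γ) (τ : Γ → Finset ℕ) (t : Γ → ℕ → ℝ) (ω : Ω) : Prop :=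
  ∀ x ∈ Finset.Icc 1 m, x ∉ R → L (M.X x ω) ∈ Y →
    ∃ r ∈ τ (L (M.X x ω)), edgeVar M x r ω ∉ Ico 0 (t (L (M.X x ω)) r)

theorem measureReal_noHit_given_labels [DecidableEq Γ] (M : Model d P) {m : ℕ} {R : Finset ℕ}
    (hR : R ⊆ Finset.Icc 1 m) {Y : Finset Γ} {τ : Γ → Finset ℕ} (hτ : ∀ y ∈ Y, τ y ⊆ R)
    {t : Γ → ℕ → ℝ} (ht : ∀ y r, t y r ∈ Icc (0 : ℝ) 1) (φ : Finset.Icc 1 m → Γ) :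
    P.real {ω | ∀ x : Finset.Icc 1 m, x.1 ∉ R → φ x ∈ Y →
      ∃ r ∈ τ (φ x), edgeVar M x r ω ∉ Ico 0 (t (φ x) r)} =
    ∏ x : Finset.Icc 1 m,
      if x.1 ∈ R then 1 else 1 - if φ x ∈ Y then ∏ r ∈ τ (φ x), t (φ x) r else 0 := by
  have h := measureReal_forall_exists_edgeVar_notMem M
    (s := {x : Finset.Icc 1 m | x.1 ∉ R ∧ φ x ∈ Y}) Subtype.val_injective (R := R)
    (τ := fun x => τ (φ x)) (t := fun x => t (φ x))
    (fun x hx => ⟨(Finset.mem_Icc.1 x.2).1, (Finset.mem_filter.1 hx).2.1⟩)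
    (fun r hr => (Finset.mem_Icc.1 (hR hr)).1)
    (fun x hx => hτ _ (Finset.mem_filter.1 hx).2.2) fun x => ht _
  simp only [Finset.mem_filter, Finset.mem_univ, true_and, and_imp] at h
  rw [h, Finset.prod_filter]
  refine Finset.prod_congr rfl fun x _ => ?_
  by_cases hxR : x.1 ∈ R <;> by_cases hxY : φ x ∈ Y <;> simp [hxR, hxY]

variable [Fintype Γ] [MeasurableSpace Γ] [MeasurableSingletonClass Γ] [Nonempty Γ]
  {L : EuclideanSpace ℝ (Fin d) → Γ}

theorem measureReal_noHit_le (M : Model d P) (hL : IsEquitable L) (n : ℕ) {m : ℕ}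
    {R : Finset ℕ} (hR : R ⊆ Finset.Icc 1 m) (ψ : ℕ → Γ) {Y : Finset Γ} {τ : Γ → Finset ℕ}
    (hτ : ∀ y ∈ Y, τ y ⊆ R) {t : Γ → ℕ → ℝ} (ht : ∀ y r, t y r ∈ Icc (0 : ℝ) 1) :
    P.real {ω | M.N n ω = m ∧ (∀ r ∈ R, L (M.X r ω) = ψ r) ∧ NoHit M L m R Y τ t ω} ≤
    P.real {ω | M.N n ω = m} * ((Fintype.card Γ : ℝ)⁻¹ ^ R.card *
      (1 - (∑ y ∈ Y, ∏ r ∈ τ y, t y r) / Fintype.card Γ) ^ (m - R.card)) := by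
  classical
  have hP : IsProbabilityMeasure P := M.U_indep.isProbabilityMeasure
  let C : (Finset.Icc 1 m → Γ) → Set (ℕ × ℕ → ℝ) := fun φ =>
    {v | ∀ x : Finset.Icc 1 m, x.1 ∉ R → φ x ∈ Y →
      ∃ r ∈ τ (φ x), v (min x.1 r, max x.1 r) ∉ Ico 0 (t (φ x) r)}
  have hC : ∀ φ, MeasurableSet (C φ) := fun φ => by
    simp only [C, Set.ofPred_forall, Set.ofPred_exists, ← exists_prop]
    refine .iInter fun x => .iInter fun _ => .iInter fun _ =>
      Finset.measurableSet_biUnion _ fun r _ => ?_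
    exact (measurable_pi_apply _) measurableSet_Ico.compl
  let Φ : Finset (Finset.Icc 1 m → Γ) :=
    Fintype.piFinset fun x => if x.1 ∈ R then {ψ x} else Finset.univ
  have hcover : {ω | M.N n ω = m ∧ (∀ r ∈ R, L (M.X r ω) = ψ r) ∧ NoHit M L m R Y τ t ω} ⊆
      {ω | M.N n ω = m ∧ (fun i : Finset.Icc 1 m => L (M.X i ω)) ∈ Φ ∧
        (fun p : ℕ × ℕ => M.U p.1 p.2 ω) ∈ C fun i => L (M.X i ω)} := by
    rintro ω ⟨hN, hψ, hno⟩
    refine ⟨hN, Fintype.mem_piFinset.2 fun x => ?_, fun x => hno x x.2⟩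
    split_ifs with hx
    · exact Finset.mem_singleton.2 (hψ x hx)
    · exact Finset.mem_univ _
  have hcard : (Fintype.card Γ : ℝ) ≠ 0 := by positivity
  have hRm : R.card ≤ m := by simpa using Finset.card_le_card hR
  refine (measureReal_mono hcover (measure_ne_top _ _)).trans
    ((measureReal_labels_mem_edges_mem_le M hL n m (fun i hi => (Finset.mem_Icc.1 hi).1)
      Φ hC).trans_eq ?_)
  have hsum : ∑ φ ∈ Φ, P.real {ω | (fun p : ℕ × ℕ => M.U p.1 p.2 ω) ∈ C φ} =
      (Fintype.card Γ - ∑ y ∈ Y, ∏ r ∈ τ y, t y r) ^ (m - R.card) := by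
    refine (Finset.sum_congr rfl fun φ _ =>
      measureReal_noHit_given_labels M hR hτ ht φ).trans ?_
    rw [sum_piFinset_prod_one_sub hR ψ fun y => if y ∈ Y then ∏ r ∈ τ y, t y r else 0,
      Finset.sum_ite_mem, Finset.univ_inter, Nat.card_Icc, Nat.add_sub_cancel]
  rw [hsum, Nat.card_Icc, Nat.add_sub_cancel, one_sub_div hcard, div_pow,
    div_eq_inv_mul _ (_ ^ _), ← mul_assoc (_ ^ _), ← inv_pow, ← pow_add,
    Nat.add_sub_cancel' hRm]

theorem measureReal_noHit_le_exp (M : Model d P) (hL : IsEquitable L) (n : ℕ) {m K : ℕ}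
    {R : Finset ℕ} (hR : R ⊆ Finset.Icc 1 m) (hRK : R.card ≤ K) (ψ : ℕ → Γ) {Y : Finset Γ}
    {τ : Γ → Finset ℕ} (hτ : ∀ y ∈ Y, τ y ⊆ R) {t : Γ → ℕ → ℝ}
    (ht : ∀ y r, t y r ∈ Icc (0 : ℝ) 1) {σ : ℝ} (hσ : 0 ≤ σ)
    (hsum : σ ≤ ∑ y ∈ Y, ∏ r ∈ τ y, t y r) :
    P.real {ω | M.N n ω = m ∧ (∀ r ∈ R, L (M.X r ω) = ψ r) ∧ NoHit M L m R Y τ t ω} ≤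
    P.real {ω | M.N n ω = m} * Real.exp (-(σ / Fintype.card Γ * (m - K))) *
      (Fintype.card Γ : ℝ)⁻¹ ^ R.card := by
  refine (measureReal_noHit_le M hL n hR ψ hτ ht).trans ?_
  rw [mul_assoc, mul_comm (Real.exp _)]
  gcongr
  set S := ∑ y ∈ Y, ∏ r ∈ τ y, t y r
  have hS : S ≤ Fintype.card Γ := by
    calc S ≤ ∑ _y ∈ Y, (1 : ℝ) := Finset.sum_le_sum fun y _ =>
          Finset.prod_le_one (fun r _ => (ht y r).1) fun r _ => (ht y r).2
      _ = Y.card := by simp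
      _ ≤ Fintype.card Γ := by exact_mod_cast Finset.card_le_univ Y
  have hRm : R.card ≤ m := by simpa using Finset.card_le_card hR
  calc (1 - S / Fintype.card Γ) ^ (m - R.card)
      ≤ Real.exp (-(σ / Fintype.card Γ)) ^ (m - R.card) := by
        refine pow_le_pow_left₀ (sub_nonneg.2 (div_le_one_of_le₀ hS (Nat.cast_nonneg _))) ?_ _
        refine (sub_le_sub_left (?_ : σ / Fintype.card Γ ≤ _) 1).trans (Real.one_sub_le_exp_neg _)
        gcongr
    _ = Real.exp (-(σ / Fintype.card Γ * (m - R.card))) := by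
        rw [← Real.exp_nat_mul, Nat.cast_sub hRm, mul_neg, mul_comm]
    _ ≤ _ := by gcongr

end NoHit

theorem measureReal_exists_finset_le [IsFiniteMeasure P] {ι : Type*} (V : Finset ι) (K : ℕ)
    (E : Finset ι → Set Ω) {B y : ℝ} (hB : 0 ≤ B) (hy : 0 ≤ y)
    (hE : ∀ R ⊆ V, R.card ≤ K → P.real (E R) ≤ B * y ^ R.card) :
    P.real {ω | ∃ R ⊆ V, R.card ≤ K ∧ ω ∈ E R} ≤ B * (1 + V.card * y) ^ K := by
  have hcover : {ω | ∃ R ⊆ V, R.card ≤ K ∧ ω ∈ E R} ⊆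
      ⋃ k ∈ Finset.range (K + 1), ⋃ R ∈ V.powersetCard k, E R := by
    rintro ω ⟨R, hRV, hRK, hω⟩
    simp only [Set.mem_iUnion]
    exact ⟨R.card, Finset.mem_range_succ_iff.2 hRK, R, Finset.mem_powersetCard.2 ⟨hRV, rfl⟩, hω⟩
  have hsize : ∀ k ∈ Finset.range (K + 1), ∑ R ∈ V.powersetCard k, P.real (E R) ≤
      B * ((V.card * y) ^ k * K.choose k) := fun k hk => by
    have hkK := Finset.mem_range_succ_iff.1 hk
    calc ∑ R ∈ V.powersetCard k, P.real (E R) ≤ ∑ _R ∈ V.powersetCard k, B * y ^ k := by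
          refine Finset.sum_le_sum fun R hR => ?_
          obtain ⟨hRV, rfl⟩ := Finset.mem_powersetCard.1 hR
          exact hE R hRV hkK
      _ = B * ((V.card.choose k : ℝ) * y ^ k * 1) := by
          rw [Finset.sum_const, Finset.card_powersetCard, nsmul_eq_mul]
          ring
      _ ≤ B * ((V.card : ℝ) ^ k * y ^ k * K.choose k) := by
          gcongr
          · exact_mod_cast Nat.choose_le_pow _ _
          · exact_mod_cast Nat.choose_pos hkK
      _ = _ := by rw [mul_pow]
  calc _ ≤ P.real (⋃ k ∈ Finset.range (K + 1), ⋃ R ∈ V.powersetCard k, E R) :=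
        measureReal_mono hcover (measure_ne_top _ _)
    _ ≤ ∑ k ∈ Finset.range (K + 1), ∑ R ∈ V.powersetCard k, P.real (E R) :=
        (measureReal_biUnion_finset_le _ _).trans
          (Finset.sum_le_sum fun k _ => measureReal_biUnion_finset_le _ _)
    _ ≤ ∑ k ∈ Finset.range (K + 1), B * ((V.card * y) ^ k * K.choose k) :=
        Finset.sum_le_sum hsize
    _ = _ := by
        rw [← Finset.mul_sum, add_comm 1, add_pow]
        simp only [one_pow, mul_one]

theorem measureReal_forall_mem_le [IsFiniteMeasure P] {ι Γ : Type*} [Nonempty Γ] (c : ι → Ω → Γ)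
    (W : Finset Γ) (R : Finset ι) {E : Set Ω} {B : ℝ}
    (hE : ∀ ψ : ι → Γ, P.real {ω | ω ∈ E ∧ ∀ r ∈ R, c r ω = ψ r} ≤ B) :
    P.real {ω | ω ∈ E ∧ ∀ r ∈ R, c r ω ∈ W} ≤ W.card ^ R.card * B := by
  classical
  let ext : (R → Γ) → ι → Γ := fun φ =>
    Function.extend Subtype.val φ fun _ => Classical.arbitrary Γ
  have hext : ∀ φ (r : R), ext φ r = φ r := fun φ r => Subtype.val_injective.extend_apply _ _ r
  have hcover : {ω | ω ∈ E ∧ ∀ r ∈ R, c r ω ∈ W} ⊆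
      ⋃ φ ∈ Fintype.piFinset fun _ : R => W, {ω | ω ∈ E ∧ ∀ r ∈ R, c r ω = ext φ r} := by
    rintro ω ⟨hω, hc⟩
    refine Set.mem_biUnion (x := fun r : R => c r ω)
      (Fintype.mem_piFinset.2 fun r => hc r r.2) ⟨hω, fun r hr => ?_⟩
    exact (hext (fun r : R => c r ω) ⟨r, hr⟩).symm
  calc _ ≤ ∑ φ ∈ Fintype.piFinset fun _ : R => W, P.real {ω | ω ∈ E ∧ ∀ r ∈ R, c r ω = ext φ r} :=
        (measureReal_mono hcover (measure_ne_top _ _)).trans (measureReal_biUnion_finset_le _ _)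
    _ ≤ ∑ _φ ∈ Fintype.piFinset fun _ : R => W, B := Finset.sum_le_sum fun φ _ => hE _
    _ = _ := by simp

section Rearrangement

theorem ofReal_sum_eq_lintegral_card_lt {ι : Type*} (s : Finset ι) {f : ι → ℝ}
    (hf : ∀ x ∈ s, 0 ≤ f x) :
    ENNReal.ofReal (∑ x ∈ s, f x) =
      ∫⁻ t in Ioi (0 : ℝ), ((s.filter fun x => t < f x).card : ENNReal) := by
  let _ : MeasurableSpace s := ⊤
  have hlayer := lintegral_eq_lintegral_meas_lt (f := fun x : s => f x) Measure.count
    (.of_forall fun x => hf x x.2) measurable_from_top.aemeasurable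
  simp only [lintegral_fintype, Measure.count_singleton, mul_one] at hlayer
  rw [← Finset.sum_coe_sort s, ENNReal.ofReal_sum_of_nonneg fun (x : s) _ => hf x x.2, hlayer]
  refine lintegral_congr fun t => ?_
  rw [Measure.count_apply_finite _ (Set.toFinite _)]
  congr 1
  refine Finset.card_bij (fun x _ => x) ?_ (fun _ _ _ _ => Subtype.ext) ?_ <;> simp +contextual

theorem sum_le_sum_of_card_lt_le {ι ι' : Type*} {s : Finset ι} {s' : Finset ι'} {f : ι → ℝ}
    {f' : ι' → ℝ} (hf : ∀ x ∈ s, 0 ≤ f x) (hf' : ∀ x ∈ s', 0 ≤ f' x)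
    (h : ∀ t : ℝ, 0 < t → (s.filter fun x => t < f x).card ≤ (s'.filter fun x => t < f' x).card) :
    ∑ x ∈ s, f x ≤ ∑ x ∈ s', f' x := by
  rw [← ENNReal.ofReal_le_ofReal_iff (Finset.sum_nonneg hf'), ofReal_sum_eq_lintegral_card_lt s hf,
    ofReal_sum_eq_lintegral_card_lt s' hf']
  exact setLIntegral_mono' measurableSet_Ioi fun t ht => by exact_mod_cast h t ht

open scoped Pointwise

variable {Γ : Type*} [AddCommGroup Γ] [DecidableEq Γ]

theorem card_le_card_add_sdiff {A B : Finset Γ} (hA : A.Nonempty) (hB : 0 ∈ B)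
    (hord : ((A.card + B.card - 1 : ℕ) : ℕ∞) ≤ AddMonoid.minOrder Γ) :
    (B.erase 0).card ≤ ((A + B) \ A).card := by
  have hcd := cauchy_davenport_minOrder_add hA ⟨0, hB⟩
  rw [min_eq_right hord, Nat.cast_le] at hcd
  rw [Finset.card_erase_of_mem hB,
    Finset.card_sdiff_of_subset (Finset.subset_add_left A hB)]
  omega

/-- Outside of `A`, the upper envelope of the translates of `κ` to the points of `A` has at least
the mass of `κ` off its peak: by the Cauchy–Davenport inequality this holds for each superlevel
set. -/
theorem sum_erase_le_sum_sup'_translate [Fintype Γ] {κ : Γ → ℝ} (hκ : ∀ x, 0 ≤ κ x)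
    (hmax : ∀ x, κ x ≤ κ 0) {A : Finset Γ} (hA : A.Nonempty)
    (hord : ((A.card + (Finset.univ.filter fun x => 0 < κ x).card : ℕ) : ℕ∞) ≤
      AddMonoid.minOrder Γ) :
    ∑ x ∈ Finset.univ.erase 0, κ x ≤ ∑ y ∈ Aᶜ, A.sup' hA fun a => κ (y - a) := by
  obtain ⟨a₀, ha₀⟩ := hA
  refine sum_le_sum_of_card_lt_le (fun x _ => hκ x)
    (fun y _ => (hκ _).trans (Finset.le_sup' (fun a => κ (y - a)) ha₀)) fun t ht => ?_
  set B := Finset.univ.filter fun x => t < κ x with hB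
  have hκB : (Finset.univ.erase 0).filter (fun x => t < κ x) = B.erase 0 :=
    Finset.filter_erase _ _ _
  have hsup : (Aᶜ).filter (fun y => t < A.sup' ⟨a₀, ha₀⟩ fun a => κ (y - a)) = (A + B) \ A := by
    ext y
    simp only [Finset.mem_filter, Finset.mem_compl, Finset.mem_sdiff, Finset.mem_add, hB,
      Finset.mem_univ, true_and, and_comm (a := y ∉ A)]
    refine and_congr_left fun _ => (Finset.lt_sup'_iff _).trans
      (exists_congr fun a => and_congr_right fun _ => ?_)
    exact ⟨fun h => ⟨y - a, h, add_sub_cancel _ _⟩, by rintro ⟨x, hx, rfl⟩; simpa using hx⟩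
  rw [hκB, hsup]
  rcases B.eq_empty_or_nonempty with hBe | ⟨x, hx⟩
  · simp [hBe]
  have h0 : 0 ∈ B :=
    Finset.mem_filter.2 ⟨Finset.mem_univ _, (Finset.mem_filter.1 hx).2.trans_le (hmax x)⟩
  refine card_le_card_add_sdiff ⟨a₀, ha₀⟩ h0 (le_trans ?_ hord)
  have hBcard : B.card ≤ (Finset.univ.filter fun x => 0 < κ x).card :=
    Finset.card_le_card (Finset.monotone_filter_right _ fun x _ hx => ht.trans hx)
  exact_mod_cast (Nat.sub_le _ _).trans (Nat.add_le_add_left hBcard _)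

theorem le_minOrder_pi_zmod {d q W : ℕ} (hW : ∀ p : ℕ, p.Prime → p ∣ q → W ≤ p) :
    (W : ℕ∞) ≤ AddMonoid.minOrder (Fin d → ZMod q) := by
  rw [AddMonoid.le_minOrder]
  intro a ha hfin
  obtain ⟨i, hi⟩ := Function.ne_iff.1 ha
  have hdvd : addOrderOf (a i) ∣ addOrderOf a :=
    addOrderOf_map_dvd (Pi.evalAddMonoidHom (fun _ : Fin d => ZMod q) i) a
  have hdvdq : addOrderOf (a i) ∣ q := addOrderOf_dvd_of_nsmul_eq_zero (by simp)
  have hprime : (addOrderOf (a i)).minFac.Prime :=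
    Nat.minFac_prime fun h => hi (AddMonoid.addOrderOf_eq_one_iff.1 h)
  have hle : (addOrderOf (a i)).minFac ≤ addOrderOf a :=
    Nat.le_of_dvd hfin.addOrderOf_pos ((Nat.minFac_dvd _).trans hdvd)
  exact_mod_cast (hW _ hprime ((Nat.minFac_dvd _).trans hdvdq)).trans hle

end Rearrangement

section CoarseGraph

variable {Γ : Type*} [AddCommGroup Γ]

/-- The vertices `x` and `r` are joined in the graph whose connection function is the kernel `κ`
evaluated at the difference of the labels. -/
def CoarseAdj (M : Model d P) (L : EuclideanSpace ℝ (Fin d) → Γ) (κ : Γ → ℝ) (ω : Ω)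
    (x r : ℕ) : Prop :=
  edgeVar M x r ω ∈ Ico 0 (κ (L (M.X x ω) - L (M.X r ω)))

/-- The set `R` of vertices has no coarse neighbour among the first `m` vertices with a label not
occurring in `R`. -/
def Stagnant (M : Model d P) (L : EuclideanSpace ℝ (Fin d) → Γ) (κ : Γ → ℝ) (m : ℕ)
    (R : Finset ℕ) (ω : Ω) : Prop :=
  ∀ x ∈ Finset.Icc 1 m, (∀ r ∈ R, L (M.X x ω) ≠ L (M.X r ω)) → ∀ r ∈ R, ¬ CoarseAdj M L κ ω x r

/-- The label `a` is bad for the set `F` of at most two vertices if all of them are `p`-likely to be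
joined to vertices labelled `a`, but have no common coarse neighbour labelled `a` among the first
`m` vertices. The sets with fewer than two elements are included so that a label which is not bad is
the label of some vertex. -/
def BadFor (M : Model d P) (L : EuclideanSpace ℝ (Fin d) → Γ) (κ : Γ → ℝ) (p : ℝ) (m : ℕ) (ω : Ω)
    (a : Γ) (F : Finset ℕ) : Prop :=
  F.card ≤ 2 ∧ (∀ r ∈ F, p ≤ κ (a - L (M.X r ω))) ∧
    ∀ x ∈ Finset.Icc 1 m, x ∉ F → L (M.X x ω) = a → ∃ r ∈ F, ¬ CoarseAdj M L κ ω x r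

/-- The label `a` is bad for some set of the first `m` vertices. -/
def BadCell (M : Model d P) (L : EuclideanSpace ℝ (Fin d) → Γ) (κ : Γ → ℝ) (p : ℝ) (m : ℕ) (ω : Ω)
    (a : Γ) : Prop :=
  ∃ F ⊆ Finset.Icc 1 m, BadFor M L κ p m ω a F

theorem exists_label_eq_of_not_badCell {M : Model d P} {L : EuclideanSpace ℝ (Fin d) → Γ}
    {κ : Γ → ℝ} {p : ℝ} {m : ℕ} {ω : Ω} {a : Γ} (h : ¬ BadCell M L κ p m ω a) :
    ∃ x ∈ Finset.Icc 1 m, L (M.X x ω) = a := by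
  by_contra! hno
  exact h ⟨∅, Finset.empty_subset _, by simp, by simp, fun x hx _ hxa => (hno x hx hxa).elim⟩

theorem exists_coarseAdj_of_not_badCell {M : Model d P} {L : EuclideanSpace ℝ (Fin d) → Γ}
    {κ : Γ → ℝ} {p : ℝ} {m : ℕ} {ω : Ω} {a : Γ} (h : ¬ BadCell M L κ p m ω a) {F : Finset ℕ}
    (hF : F ⊆ Finset.Icc 1 m) (hcard : F.card ≤ 2) (hp : ∀ r ∈ F, p ≤ κ (a - L (M.X r ω))) :
    ∃ x ∈ Finset.Icc 1 m, x ∉ F ∧ ∀ r ∈ F, CoarseAdj M L κ ω x r := by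
  by_contra! hno
  exact h ⟨F, hF, hcard, hp, fun x hx hxF _ => hno x hx hxF⟩

variable [Fintype Γ] [MeasurableSpace Γ] [MeasurableSingletonClass Γ]
  {L : EuclideanSpace ℝ (Fin d) → Γ} {κ : Γ → ℝ}

theorem measureReal_stagnant_given_labels_le [DecidableEq Γ] (M : Model d P)
    (hL : IsEquitable L) (n : ℕ) {m K : ℕ} (hκ : ∀ x, κ x ∈ Icc (0 : ℝ) 1) (hmax : ∀ x, κ x ≤ κ 0)
    (hord : ((K + (Finset.univ.filter fun x => 0 < κ x).card : ℕ) : ℕ∞) ≤ AddMonoid.minOrder Γ)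
    {σ : ℝ} (hσ : 0 ≤ σ) (hσκ : σ ≤ ∑ x ∈ Finset.univ.erase 0, κ x) {R : Finset ℕ}
    (hR : R ⊆ Finset.Icc 1 m) (hRK : R.card ≤ K) (hRne : R.Nonempty) (ψ : ℕ → Γ) :
    P.real {ω | (M.N n ω = m ∧ Stagnant M L κ m R ω) ∧ ∀ r ∈ R, L (M.X r ω) = ψ r} ≤
    P.real {ω | M.N n ω = m} *
      Real.exp (-(σ / Fintype.card Γ * (m - K))) *
      (Fintype.card Γ : ℝ)⁻¹ ^ R.card := by
  have hP : IsProbabilityMeasure P := M.U_indep.isProbabilityMeasure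
  set A := R.image ψ
  have hA : A.Nonempty := hRne.image ψ
  have hAK : A.card ≤ K := Finset.card_image_le.trans hRK
  have hclosest : ∀ y, ∃ r ∈ R, A.sup' hA (fun a => κ (y - a)) = κ (y - ψ r) := fun y => by
    obtain ⟨a, ha, hya⟩ := A.exists_mem_eq_sup' hA fun a => κ (y - a)
    obtain ⟨r, hr, rfl⟩ := Finset.mem_image.1 ha
    exact ⟨r, hr, hya⟩
  choose s hsR hs using hclosest
  have hmass : σ ≤ ∑ y ∈ Aᶜ, ∏ r ∈ {s y}, κ (y - ψ r) := by
    simp only [Finset.prod_singleton, ← hs]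
    exact hσκ.trans <| sum_erase_le_sum_sup'_translate (fun x => (hκ x).1) hmax hA
      (le_trans (by exact_mod_cast Nat.add_le_add_right hAK _) hord)
  refine (measureReal_mono ?_ (measure_ne_top _ _)).trans
    (measureReal_noHit_le_exp M hL n hR hRK ψ (fun y _ => Finset.singleton_subset_iff.2 (hsR y))
      (fun y r => hκ (y - ψ r)) hσ hmass)
  rintro ω ⟨⟨hN, hstag⟩, hψ⟩
  refine ⟨hN, hψ, fun x hx _ hxA => ⟨s (L (M.X x ω)), Finset.mem_singleton_self _, ?_⟩⟩
  beta_reduce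
  rw [← hψ _ (hsR _)]
  refine hstag x hx (fun r hr h => Finset.mem_compl.1 hxA ?_) _ (hsR _)
  exact Finset.mem_image.2 ⟨r, hr, by rw [h, hψ r hr]⟩

theorem measureReal_exists_stagnant_le [DecidableEq Γ] (M : Model d P) (hL : IsEquitable L)
    (n m K : ℕ) (hκ : ∀ x, κ x ∈ Icc (0 : ℝ) 1) (hmax : ∀ x, κ x ≤ κ 0)
    (hord : ((K + (Finset.univ.filter fun x => 0 < κ x).card : ℕ) : ℕ∞) ≤ AddMonoid.minOrder Γ)
    {σ : ℝ} (hσ : 0 ≤ σ) (hσκ : σ ≤ ∑ x ∈ Finset.univ.erase 0, κ x) (W : Finset Γ) :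
    P.real {ω | M.N n ω = m ∧ ∃ R ⊆ Finset.Icc 1 m, R.card ≤ K ∧
      (∀ r ∈ R, L (M.X r ω) ∈ W) ∧ R.Nonempty ∧ Stagnant M L κ m R ω} ≤
    P.real {ω | M.N n ω = m} *
      Real.exp (-(σ / Fintype.card Γ * (m - K))) *
      (1 + m * (W.card / Fintype.card Γ)) ^ K := by
  have hP : IsProbabilityMeasure P := M.U_indep.isProbabilityMeasure
  set B := P.real {ω | M.N n ω = m} *
    Real.exp (-(σ / Fintype.card Γ * (m - K)))
  have hB : 0 ≤ B := mul_nonneg measureReal_nonneg (Real.exp_pos _).le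
  let E : Finset ℕ → Set Ω := fun R => {ω | M.N n ω = m ∧ Stagnant M L κ m R ω}
  have hunion := measureReal_exists_finset_le (P := P) (Finset.Icc 1 m) K
    (fun R => {ω | R.Nonempty ∧ ω ∈ E R ∧ ∀ r ∈ R, L (M.X r ω) ∈ W}) hB
    (y := W.card / Fintype.card Γ) (by positivity) fun R hR hRK => by
      rcases R.eq_empty_or_nonempty with rfl | hRne
      · simp [hB]
      simp only [hRne, true_and]
      refine (measureReal_forall_mem_le (fun r ω => L (M.X r ω)) W R fun ψ =>
        measureReal_stagnant_given_labels_le M hL n hκ hmax hord hσ hσκ hR hRK hRne ψ).trans_eq ?_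
      ring
  rw [Nat.card_Icc, Nat.add_sub_cancel] at hunion
  refine (measureReal_mono ?_ (measure_ne_top _ _)).trans hunion
  rintro ω ⟨hN, R, hR, hRK, hW, hRne, hstag⟩
  exact ⟨R, hR, hRK, hRne, ⟨hN, hstag⟩, hW⟩

theorem measureReal_badFor_given_labels_le (M : Model d P) (hL : IsEquitable L) (n : ℕ) {m K : ℕ}
    (hκ : ∀ x, κ x ∈ Icc (0 : ℝ) 1) {p : ℝ} (hp : p ∈ Icc (0 : ℝ) 1) {T : Finset Γ} {σ : ℝ}
    (hσ : 0 ≤ σ) (hσT : σ ≤ T.card * p ^ 2) {R : Finset ℕ} (hR : R ⊆ Finset.Icc 1 m)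
    (hRK : R.card ≤ K) {F : Γ → Finset ℕ} (hF : ∀ a ∈ T, F a ⊆ R) (ψ : ℕ → Γ) :
    P.real {ω | (M.N n ω = m ∧ ∀ a ∈ T, BadFor M L κ p m ω a (F a)) ∧
      ∀ r ∈ R, L (M.X r ω) = ψ r} ≤
    P.real {ω | M.N n ω = m} * Real.exp (-(σ / Fintype.card Γ * (m - K))) *
      (Fintype.card Γ : ℝ)⁻¹ ^ R.card := by
  have hP : IsProbabilityMeasure P := M.U_indep.isProbabilityMeasure
  by_cases hfit : ∀ a ∈ T, (F a).card ≤ 2 ∧ ∀ r ∈ F a, p ≤ κ (a - ψ r)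
  · have hmass : σ ≤ ∑ a ∈ T, ∏ r ∈ F a, κ (a - ψ r) := by
      refine hσT.trans ?_
      rw [← nsmul_eq_mul]
      refine Finset.card_nsmul_le_sum T _ _ fun a ha => ?_
      calc p ^ 2 ≤ p ^ (F a).card := pow_le_pow_of_le_one hp.1 hp.2 (hfit a ha).1
        _ = ∏ _r ∈ F a, p := by rw [Finset.prod_const]
        _ ≤ _ := Finset.prod_le_prod (fun _ _ => hp.1) (hfit a ha).2
    refine (measureReal_mono ?_ (measure_ne_top _ _)).trans
      (measureReal_noHit_le_exp M hL n hR hRK ψ hF (fun y r => hκ (y - ψ r)) hσ hmass)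
    rintro ω ⟨⟨hN, hbad⟩, hψ⟩
    refine ⟨hN, hψ, fun x hx hxR hxT => ?_⟩
    obtain ⟨r, hr, hxr⟩ := (hbad _ hxT).2.2 x hx (fun h => hxR (hF _ hxT h)) rfl
    exact ⟨r, hr, by rwa [CoarseAdj, hψ r (hF _ hxT hr)] at hxr⟩
  · have hempty : {ω | (M.N n ω = m ∧ ∀ a ∈ T, BadFor M L κ p m ω a (F a)) ∧
        ∀ r ∈ R, L (M.X r ω) = ψ r} = ∅ := by
      refine Set.eq_empty_of_forall_notMem fun ω ⟨⟨_, hbad⟩, hψ⟩ => hfit fun a ha => ?_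
      exact ⟨(hbad a ha).1, fun r hr => hψ r (hF a ha hr) ▸ (hbad a ha).2.1 r hr⟩
    rw [hempty, measureReal_empty]
    exact mul_nonneg (mul_nonneg measureReal_nonneg (Real.exp_pos _).le) (by positivity)

theorem measureReal_exists_badFor_given_labels_le (M : Model d P) (hL : IsEquitable L) (n : ℕ)
    {m K : ℕ} (hκ : ∀ x, κ x ∈ Icc (0 : ℝ) 1) {p : ℝ} (hp : p ∈ Icc (0 : ℝ) 1) {T : Finset Γ}
    {σ : ℝ} (hσ : 0 ≤ σ) (hσT : σ ≤ T.card * p ^ 2) {R : Finset ℕ} (hR : R ⊆ Finset.Icc 1 m)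
    (hRK : R.card ≤ K) (ψ : ℕ → Γ) :
    P.real {ω | (M.N n ω = m ∧ ∃ F : Γ → Finset ℕ, ∀ a ∈ T, F a ⊆ R ∧ BadFor M L κ p m ω a (F a)) ∧
      ∀ r ∈ R, L (M.X r ω) = ψ r} ≤
    2 ^ (K * T.card) * (P.real {ω | M.N n ω = m} *
      Real.exp (-(σ / Fintype.card Γ * (m - K)))) * (Fintype.card Γ : ℝ)⁻¹ ^ R.card := by
  classical
  have hP : IsProbabilityMeasure P := M.U_indep.isProbabilityMeasure
  let I : Finset (Γ → Finset ℕ) := Fintype.piFinset fun a => if a ∈ T then R.powerset else {∅}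
  have hIF : ∀ F ∈ I, ∀ a ∈ T, F a ⊆ R := fun F hF a ha => by
    simpa [ha] using Fintype.mem_piFinset.1 hF a
  have hI : (I.card : ℝ) ≤ 2 ^ (K * T.card) := by
    have hcard : I.card = 2 ^ (R.card * T.card) := by
      rw [Fintype.card_piFinset]
      simp only [apply_ite Finset.card, Finset.card_powerset, Finset.card_singleton,
        Finset.prod_ite_mem, Finset.univ_inter, Finset.prod_const, pow_mul]
    rw [hcard]
    exact_mod_cast Nat.pow_le_pow_right two_pos (Nat.mul_le_mul_right _ hRK)
  have hcover : {ω | (M.N n ω = m ∧ ∃ F : Γ → Finset ℕ, ∀ a ∈ T, F a ⊆ R ∧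
      BadFor M L κ p m ω a (F a)) ∧ ∀ r ∈ R, L (M.X r ω) = ψ r} ⊆
      ⋃ F ∈ I, {ω | (M.N n ω = m ∧ ∀ a ∈ T, BadFor M L κ p m ω a (F a)) ∧
        ∀ r ∈ R, L (M.X r ω) = ψ r} := by
    rintro ω ⟨⟨hN, F, hF⟩, hψ⟩
    refine Set.mem_biUnion (x := fun a => if a ∈ T then F a else ∅)
      (Fintype.mem_piFinset.2 fun a => ?_) ⟨⟨hN, fun a ha => ?_⟩, hψ⟩
    · split_ifs with ha
      exacts [Finset.mem_powerset.2 (hF a ha).1, Finset.mem_singleton_self _]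
    · simpa only [if_pos ha] using (hF a ha).2
  refine (measureReal_mono hcover (measure_ne_top _ _)).trans
    ((measureReal_biUnion_finset_le _ _).trans ((Finset.sum_le_card_nsmul _ _ _ fun F hF =>
      measureReal_badFor_given_labels_le M hL n hκ hp hσ hσT hR hRK (hIF F hF) ψ).trans ?_))
  rw [nsmul_eq_mul, mul_assoc (2 ^ _)]
  exact mul_le_mul_of_nonneg_right hI
    (mul_nonneg (mul_nonneg measureReal_nonneg (Real.exp_pos _).le) (by positivity))

theorem measureReal_forall_badCell_le (M : Model d P) (hL : IsEquitable L) (n m : ℕ) {K : ℕ}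
    (hκ : ∀ x, κ x ∈ Icc (0 : ℝ) 1) {p : ℝ} (hp : p ∈ Icc (0 : ℝ) 1) {T : Finset Γ}
    (hTK : T.card * 2 ≤ K) {σ : ℝ} (hσ : 0 ≤ σ) (hσT : σ ≤ T.card * p ^ 2) {W : Finset Γ}
    (hW : ∀ a ∈ T, ∀ b, p ≤ κ (a - b) → b ∈ W) :
    P.real {ω | M.N n ω = m ∧ ∀ a ∈ T, BadCell M L κ p m ω a} ≤
    2 ^ (K * T.card) * (P.real {ω | M.N n ω = m} *
      Real.exp (-(σ / Fintype.card Γ * (m - K)))) * (1 + m * (W.card / Fintype.card Γ)) ^ K := by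
  have hP : IsProbabilityMeasure P := M.U_indep.isProbabilityMeasure
  let E : Finset ℕ → Set Ω := fun R =>
    {ω | M.N n ω = m ∧ ∃ F : Γ → Finset ℕ, ∀ a ∈ T, F a ⊆ R ∧ BadFor M L κ p m ω a (F a)}
  have hunion := measureReal_exists_finset_le (P := P) (Finset.Icc 1 m) K
    (fun R => {ω | ω ∈ E R ∧ ∀ r ∈ R, L (M.X r ω) ∈ W})
    (B := 2 ^ (K * T.card) * (P.real {ω | M.N n ω = m} *
      Real.exp (-(σ / Fintype.card Γ * (m - K))))) (y := W.card / Fintype.card Γ)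
    (mul_nonneg (by positivity) (mul_nonneg measureReal_nonneg (Real.exp_pos _).le))
    (by positivity) fun R hR hRK => by
      refine (measureReal_forall_mem_le (fun r ω => L (M.X r ω)) W R fun ψ =>
        measureReal_exists_badFor_given_labels_le M hL n hκ hp hσ hσT hR hRK ψ).trans_eq ?_
      ring
  rw [Nat.card_Icc, Nat.add_sub_cancel] at hunion
  refine (measureReal_mono ?_ (measure_ne_top _ _)).trans hunion
  rintro ω ⟨hN, hbad⟩
  choose! F hFm hF using hbad
  refine ⟨T.biUnion F, Finset.biUnion_subset.2 hFm,
    (Finset.card_biUnion_le_card_mul T F 2 fun a ha => (hF a ha).1).trans hTK,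
    ⟨hN, F, fun a ha => ⟨Finset.subset_biUnion_of_mem F ha, hF a ha⟩⟩, fun r hr => ?_⟩
  obtain ⟨a, ha, hra⟩ := Finset.mem_biUnion.1 hr
  exact hW a ha _ ((hF a ha).2.1 r hra)

end CoarseGraph

section Window

variable {q : ℕ}

/-- The integer vectors of sup norm at most `w`. -/
def box (d w : ℕ) : Finset (Fin d → ℤ) := Fintype.piFinset fun _ => Finset.Icc (-(w : ℤ)) w

/-- Reduction of integer vectors modulo `q`, onto the discrete torus which indexes the cells. -/
def toTorus (q : ℕ) (z : Fin d → ℤ) : Fin d → ZMod q := fun i => z i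

/-- The cube of radius `w` around `o` in the discrete torus. -/
def win (w : ℕ) (o : Fin d → ZMod q) : Finset (Fin d → ZMod q) :=
  (box d w).image fun z => o + toTorus q z

theorem mem_box {w : ℕ} {z : Fin d → ℤ} : z ∈ box d w ↔ ∀ i, |z i| ≤ w := by
  simp only [box, Fintype.mem_piFinset, Finset.mem_Icc, abs_le]

theorem toTorus_add (z y : Fin d → ℤ) : toTorus q (z + y) = toTorus q z + toTorus q y :=
  funext fun _ => Int.cast_add _ _

theorem toTorus_neg (z : Fin d → ℤ) : toTorus q (-z) = -toTorus q z :=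
  funext fun _ => Int.cast_neg _

theorem mem_win {w : ℕ} {o a : Fin d → ZMod q} :
    a ∈ win w o ↔ ∃ z ∈ box d w, o + toTorus q z = a :=
  Finset.mem_image

theorem card_win_le (w : ℕ) (o : Fin d → ZMod q) : (win w o).card ≤ (2 * w + 1) ^ d := by
  refine Finset.card_image_le.trans_eq ?_
  rw [box, Fintype.card_piFinset_const, Int.card_Icc]
  congr 1
  omega

theorem self_mem_win (w : ℕ) (o : Fin d → ZMod q) : o ∈ win w o :=
  mem_win.2 ⟨0, mem_box.2 fun i => by simp, by ext; simp [toTorus]⟩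

theorem mem_win_trans {u v : ℕ} {o a b : Fin d → ZMod q} (ha : a ∈ win u o) (hb : b ∈ win v a) :
    b ∈ win (u + v) o := by
  obtain ⟨z, hz, rfl⟩ := mem_win.1 ha
  obtain ⟨y, hy, rfl⟩ := mem_win.1 hb
  refine mem_win.2 ⟨z + y, mem_box.2 fun i => ?_, by rw [toTorus_add, add_assoc]⟩
  push_cast
  exact (abs_add_le _ _).trans (add_le_add (mem_box.1 hz i) (mem_box.1 hy i))

theorem win_subset_win {u v : ℕ} (h : u ≤ v) (o : Fin d → ZMod q) : win u o ⊆ win v o :=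
  Finset.image_subset_image fun _ hz =>
    mem_box.2 fun i => (mem_box.1 hz i).trans (by exact_mod_cast h)

theorem sub_mem_win_zero {w : ℕ} {o a : Fin d → ZMod q} : a - o ∈ win w 0 ↔ a ∈ win w o := by
  simp only [mem_win, zero_add, eq_sub_iff_add_eq']

theorem mem_win_comm {w : ℕ} {o a : Fin d → ZMod q} : a ∈ win w o ↔ o ∈ win w a := by
  suffices h : ∀ {o a : Fin d → ZMod q}, a ∈ win w o → o ∈ win w a from ⟨h, h⟩
  intro o a ha
  obtain ⟨z, hz, rfl⟩ := mem_win.1 ha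
  exact mem_win.2 ⟨-z, mem_box.2 fun i => by simpa using mem_box.1 hz i, by simp [toTorus_neg]⟩

theorem add_nsmul_single_mem_win (o : Fin d → ZMod q) (t : ℕ) (i : Fin d) :
    o + t • Pi.single i 1 ∈ win t o := by
  refine mem_win.2 ⟨Pi.single i t, mem_box.2 fun k => ?_, congrArg (o + ·) (funext fun k => ?_)⟩ <;>
  rcases eq_or_ne k i with rfl | hk <;> simp [toTorus, *]

theorem add_single_mem_win (o : Fin d → ZMod q) (i : Fin d) : o + Pi.single i 1 ∈ win 1 o := by
  simpa only [one_nsmul] using add_nsmul_single_mem_win o 1 i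

theorem forall_of_add_single [NeZero q] {p : (Fin d → ZMod q) → Prop} {a : Fin d → ZMod q}
    (ha : p a) (hp : ∀ b i, p b → p (b + Pi.single i 1)) (b : Fin d → ZMod q) : p b := by
  have hnsmul : ∀ (n : ℕ) b i, p b → p (b + n • Pi.single i 1) := fun n b i hb => by
    induction n with
    | zero => simpa using hb
    | succ n ih => simpa only [succ_nsmul, ← add_assoc] using hp _ i ih
  have hsum : ∀ s : Finset (Fin d), p (a + ∑ i ∈ s, ((b - a) i).val • Pi.single i 1) := fun s => by
    induction s using Finset.induction_on with
    | empty => simpa using ha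
    | insert i s hi ih =>
      rw [Finset.sum_insert hi, add_left_comm, add_comm]
      exact hnsmul _ _ _ ih
  have hb : a + ∑ i, ((b - a) i).val • (Pi.single i 1 : Fin d → ZMod q) = b := by
    rw [← eq_sub_iff_add_eq', ← Finset.univ_sum_single (b - a)]
    refine Finset.sum_congr rfl fun i _ => ?_
    rw [Finset.univ_sum_single, ← Pi.single_smul, nsmul_one, ZMod.natCast_zmod_val]
  exact hb ▸ hsum Finset.univ

end Window

section Renormalisation

variable {q : ℕ} {good : (Fin d → ZMod q) → Prop} {w J : ℕ} {a b : Fin d → ZMod q} {i j : Fin d}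

/-- Every cube of radius `w` contains fewer than `J` bad cells. -/
def SparseBad (good : (Fin d → ZMod q) → Prop) (w J : ℕ) : Prop :=
  ∀ (o : Fin d → ZMod q) (T : Finset (Fin d → ZMod q)),
    T ⊆ win w o → (∀ a ∈ T, ¬ good a) → T.card < J

/-- A step between neighbouring good cells; the equivalence relation which it generates is the
connectedness of good cells. -/
def GoodStep (good : (Fin d → ZMod q) → Prop) (a b : Fin d → ZMod q) : Prop :=
  good a ∧ good b ∧ b ∈ win 1 a

/-- The segment of `J` cells which starts at `a` in direction `i` consists of good cells. -/
def Clean (good : (Fin d → ZMod q) → Prop) (i : Fin d) (J : ℕ) (a : Fin d → ZMod q) : Prop :=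
  ∀ t < J, good (a + t • Pi.single i 1)

theorem Clean.self (h : Clean good i J a) (hJ : 0 < J) : good a := by
  simpa using h 0 hJ

theorem GoodStep.eqvGen_add_nsmul {n : ℕ} (h : ∀ k < n, good (a + k • Pi.single i 1)) :
    ∀ k < n, Relation.EqvGen (GoodStep good) a (a + k • Pi.single i 1) := by
  intro k
  induction k with
  | zero => exact fun _ => by simpa using Relation.EqvGen.refl a
  | succ k ih =>
    refine fun hk => (ih (by omega)).trans _ _ _ (.rel _ _ ⟨h k (by omega), h _ hk, ?_⟩)
    rw [succ_nsmul, ← add_assoc]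
    exact add_single_mem_win _ i

theorem GoodStep.eqvGen_add_nsmul_add_nsmul {n : ℕ} (h : ∀ k < n, good (a + k • Pi.single i 1))
    {k l : ℕ} (hk : k < n) (hl : l < n) :
    Relation.EqvGen (GoodStep good) (a + k • Pi.single i 1) (a + l • Pi.single i 1) :=
  ((eqvGen_add_nsmul h k hk).symm).trans _ _ _ (eqvGen_add_nsmul h l hl)

namespace SparseBad

theorem pos (h : SparseBad good w J) : 0 < J := by
  simpa using h 0 ∅ (Finset.empty_subset _)

theorem card_lt {β : Type*} (h : SparseBad good w J) (o : Fin d → ZMod q) {s : Finset β}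
    {f : β → Fin d → ZMod q} (hinj : Set.InjOn f s) (hmem : ∀ k ∈ s, f k ∈ win w o)
    (hbad : ∀ k ∈ s, ¬ good (f k)) : s.card < J := by
  rw [← Finset.card_image_of_injOn hinj]
  exact h o _ (Finset.image_subset_iff.2 hmem) (Finset.forall_mem_image.2 hbad)

open Classical in
theorem card_filter_not_clean_lt (h : SparseBad good w J) (hq : 2 * J ≤ q) (hw : 3 * J ≤ w)
    (hij : i ≠ j) (a : Fin d → ZMod q) :
    ((Finset.range (2 * J)).filter fun k => ¬ Clean good i J (a + k • Pi.single j 1)).card < J := by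
  set I := (Finset.range (2 * J)).filter fun k => ¬ Clean good i J (a + k • Pi.single j 1)
  have hwitness : ∀ k ∈ I, ∃ t < J, ¬ good (a + k • Pi.single j 1 + t • Pi.single i 1) :=
    fun k hk => by simpa [Clean] using (Finset.mem_filter.1 hk).2
  choose! t ht hbad using hwitness
  have hlt : ∀ k ∈ I, k < 2 * J := fun k hk => Finset.mem_range.1 (Finset.mem_filter.1 hk).1
  refine h.card_lt a (f := fun k => a + k • Pi.single j 1 + t k • Pi.single i 1)
    (fun k hk l hl hkl => ?_) (fun k hk => ?_) hbad
  · have hcoord := congrFun hkl j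
    simp only [Pi.add_apply, Pi.smul_apply, Pi.single_eq_same, Pi.single_eq_of_ne hij.symm,
      nsmul_one, smul_zero, add_zero, add_right_inj] at hcoord
    exact CharP.natCast_injOn_Iio (ZMod q) q ((hlt k hk).trans_le hq) ((hlt l hl).trans_le hq)
      hcoord
  · have := hlt k hk
    have := ht k hk
    exact win_subset_win (by omega) a
      (mem_win_trans (add_nsmul_single_mem_win a k j) (add_nsmul_single_mem_win _ (t k) i))

theorem exists_line (h : SparseBad good w J) (hq : 2 * J ≤ q) (hw : 3 * J ≤ w) (hij : i ≠ j)
    (a : Fin d → ZMod q) :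
    ∃ t < J, ∀ k < 2 * J, good (a + t • Pi.single i 1 + k • Pi.single j 1) := by
  by_contra! hcon
  choose! k hk hbad using hcon
  refine (h.card_lt a (s := Finset.range J)
    (f := fun t => a + t • Pi.single i 1 + k t • Pi.single j 1) (fun t ht u hu htu => ?_)
    (fun t ht => ?_) fun t ht => hbad t (Finset.mem_range.1 ht)).ne (Finset.card_range J)
  · have hcoord := congrFun htu i
    simp only [Pi.add_apply, Pi.smul_apply, Pi.single_eq_same, Pi.single_eq_of_ne hij,
      nsmul_one, smul_zero, add_zero, add_right_inj] at hcoord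
    rw [Finset.coe_range, mem_Iio] at ht hu
    exact CharP.natCast_injOn_Iio (ZMod q) q (mem_Iio.2 (by omega)) (mem_Iio.2 (by omega)) hcoord
  · have ht := Finset.mem_range.1 ht
    have := hk t ht
    exact win_subset_win (by omega) a
      (mem_win_trans (add_nsmul_single_mem_win a t i) (add_nsmul_single_mem_win _ (k t) j))

theorem exists_clean_and_clean (h : SparseBad good w J) (hq : 2 * J ≤ q) (hw : 3 * J ≤ w)
    (hij : i ≠ j) (a b : Fin d → ZMod q) : ∃ k < 2 * J,
      Clean good i J (a + k • Pi.single j 1) ∧ Clean good i J (b + k • Pi.single j 1) := by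
  classical
  by_contra! hcon
  have hcover : Finset.range (2 * J) ⊆
      ((Finset.range (2 * J)).filter fun k => ¬ Clean good i J (a + k • Pi.single j 1)) ∪
      ((Finset.range (2 * J)).filter fun k => ¬ Clean good i J (b + k • Pi.single j 1)) := by
    intro k hk
    simp only [Finset.mem_union, Finset.mem_filter, hk, true_and]
    exact not_and_or.1 fun hk' => hcon k (Finset.mem_range.1 hk) hk'.1 hk'.2
  have hcard := (Finset.card_le_card hcover).trans (Finset.card_union_le _ _)
  rw [Finset.card_range] at hcard
  have := h.card_filter_not_clean_lt hq hw hij a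
  have := h.card_filter_not_clean_lt hq hw hij b
  omega

theorem eqvGen_of_clean_add_nsmul (h : SparseBad good w J) (hq : 2 * J ≤ q) (hw : 3 * J ≤ w)
    (hij : i ≠ j) {k l : ℕ} (hk : k < 2 * J) (hl : l < 2 * J)
    (hak : Clean good i J (a + k • Pi.single j 1)) (hal : Clean good i J (a + l • Pi.single j 1)) :
    Relation.EqvGen (GoodStep good) (a + k • Pi.single j 1) (a + l • Pi.single j 1) := by
  obtain ⟨t, ht, hline⟩ := h.exists_line hq hw hij a
  have hcross := GoodStep.eqvGen_add_nsmul_add_nsmul hline hk hl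
  rw [add_right_comm a _ (k • _), add_right_comm a _ (l • _)] at hcross
  exact ((GoodStep.eqvGen_add_nsmul hak t ht).trans _ _ _ hcross).trans _ _ _
    (GoodStep.eqvGen_add_nsmul hal t ht).symm

theorem eqvGen_of_clean (h : SparseBad good w J) (hq : 2 * J ≤ q) (hw : 3 * J ≤ w) (hij : i ≠ j)
    (ha : Clean good i J a) (hb : Clean good i J b) : Relation.EqvGen (GoodStep good) a b := by
  have hJ := h.pos
  have : NeZero q := ⟨by omega⟩
  suffices hall : ∀ b, ∀ k < 2 * J, Clean good i J (b + k • Pi.single j 1) →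
      Relation.EqvGen (GoodStep good) a (b + k • Pi.single j 1) by
    simpa using hall b 0 (by omega) (by simpa using hb)
  refine forall_of_add_single (a := a) (fun k hk hak => ?_) fun b i' ih k hk hbk => ?_
  · have hzero : Clean good i J (a + 0 • Pi.single j 1) := by simpa using ha
    simpa using h.eqvGen_of_clean_add_nsmul hq hw hij (by omega) hk hzero hak
  · obtain ⟨l, hl, hbl, hbl'⟩ := h.exists_clean_and_clean hq hw hij b (b + Pi.single i' 1)
    refine ((ih l hl hbl).trans _ _ _ (.rel _ _ ⟨hbl.self hJ, hbl'.self hJ, ?_⟩)).trans _ _ _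
      (h.eqvGen_of_clean_add_nsmul hq hw hij hl hk hbl' hbk)
    rw [add_right_comm]
    exact add_single_mem_win _ i'

variable {ι : Type*} {c : ι → Fin d → ZMod q} {r : Setoid ι}

theorem rel_of_clean (h : SparseBad good w J) (hq : 2 * J ≤ q) (hw : 3 * J ≤ w) (hij : i ≠ j)
    (hne : ∀ a, good a → ∃ x, c x = a)
    (hgood : ∀ a, good a → ∀ x y, c x ∈ win 1 a → c y ∈ win 1 a → r x y) {x y : ι}
    (hx : Clean good i J (c x)) (hy : Clean good i J (c y)) : r x y := by
  have : Nonempty ι := ⟨x⟩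
  choose! f hf using hne
  have hstep : Relation.EqvGen.setoid (GoodStep good) ≤ r.comap f := Setoid.eqvGen_le
    fun a b ⟨ha, hb, hab⟩ => hgood a ha _ _ (by rw [hf a ha]; exact self_mem_win 1 a)
      (by rwa [hf b hb])
  have hself : ∀ z, good (c z) → r z (f (c z)) := fun z hz =>
    hgood _ hz _ _ (self_mem_win _ _) (by rw [hf _ hz]; exact self_mem_win _ _)
  exact r.trans (r.trans (hself x (hx.self h.pos)) (hstep (h.eqvGen_of_clean hq hw hij hx hy)))
    (r.symm (hself y (hy.self h.pos)))

end SparseBad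

variable {ι : Type*} {c : ι → Fin d → ZMod q} {r : Setoid ι}

theorem exists_injOn_cluster {D K : ℕ} (v : ι)
    (hgrow : ∀ R : Finset ι, R.Nonempty → R.card < K → (∀ y ∈ R, c y ∈ win (K * D) (c v)) →
      ∃ x, (∀ y ∈ R, c x ≠ c y) ∧ ∃ y ∈ R, r y x ∧ c x ∈ win D (c y)) :
    ∀ k < K, ∃ R : Finset ι, R.card = k + 1 ∧ Set.InjOn c R ∧
      ∀ y ∈ R, r v y ∧ c y ∈ win (k * D) (c v) := by
  classical
  intro k
  induction k with
  | zero =>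
    refine fun _ => ⟨{v}, Finset.card_singleton v, by simp, fun y hy => ?_⟩
    rw [Finset.mem_singleton.1 hy]
    exact ⟨r.refl v, self_mem_win _ _⟩
  | succ k ih =>
    intro hk
    obtain ⟨R, hcard, hinj, hR⟩ := ih (by omega)
    obtain ⟨x, hxR, y, hy, hyx, hxD⟩ := hgrow R (Finset.card_pos.1 (by omega)) (by omega)
      fun y hy => win_subset_win (Nat.mul_le_mul_right _ (by omega)) _ (hR y hy).2
    have hx : x ∉ R := fun h => hxR x h rfl
    refine ⟨insert x R, by rw [Finset.card_insert_of_notMem hx, hcard], ?_, ?_⟩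
    · rw [Finset.coe_insert, Set.injOn_insert (by simpa using hx)]
      exact ⟨hinj, fun ⟨z, hz, hzx⟩ => hxR z hz hzx.symm⟩
    · refine Finset.forall_mem_insert _ _ _ |>.2 ⟨⟨r.trans (hR y hy).1 hyx, ?_⟩, fun z hz =>
        ⟨(hR z hz).1, win_subset_win (Nat.mul_le_mul_right _ (by omega)) _ (hR z hz).2⟩⟩
      rw [Nat.succ_mul]
      exact mem_win_trans (hR y hy).2 hxD

theorem SparseBad.exists_clean_of_injOn (h : SparseBad good w J) {R : Finset ι}
    (hinj : Set.InjOn c R) (hcard : J * J ≤ R.card) {u : ℕ} (hu : u + J ≤ w) {o : Fin d → ZMod q}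
    (hR : ∀ y ∈ R, c y ∈ win u o) (i : Fin d) : ∃ y ∈ R, Clean good i J (c y) := by
  classical
  by_contra! hcon
  simp only [Clean, not_forall] at hcon
  choose! t ht hbad using hcon
  have hfibre : R.card ≤ J * (R.image fun y => c y + t y • Pi.single i 1).card := by
    refine Finset.card_le_mul_card_image R J fun b _ => ?_
    rw [← Finset.card_range J]
    refine Finset.card_le_card_of_injOn t (fun y hy => ?_) fun y hy z hz hyz => ?_
    · simpa using ht y (Finset.mem_filter.1 hy).1
    · obtain ⟨hyR, hyb⟩ := Finset.mem_filter.1 hy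
      obtain ⟨hzR, hzb⟩ := Finset.mem_filter.1 hz
      refine hinj hyR hzR (add_right_cancel (b := t z • Pi.single i 1) ?_)
      rw [hzb, ← hyb, hyz]
  have hlt := h o (R.image fun y => c y + t y • Pi.single i 1)
    (Finset.image_subset_iff.2 fun y hy => ?_) (Finset.forall_mem_image.2 hbad)
  · exact absurd (hcard.trans hfibre) (not_le.2 (Nat.mul_lt_mul_of_pos_left hlt h.pos))
  · have := ht y hy
    exact win_subset_win (by omega) o
      (mem_win_trans (hR y hy) (add_nsmul_single_mem_win _ (t y) i))

theorem SparseBad.rel {D : ℕ} (h : SparseBad good w J) (hd : 2 ≤ d) (hq : 2 * J ≤ q)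
    (hw : J * J * D + 3 * J ≤ w) (hne : ∀ a, good a → ∃ x, c x = a)
    (hgood : ∀ a, good a → ∀ x y, c x ∈ win 1 a → c y ∈ win 1 a → r x y)
    (hgrow : ∀ o, ∀ R : Finset ι, R.Nonempty → R.card < J * J → (∀ y ∈ R, c y ∈ win w o) →
      ∃ x, (∀ y ∈ R, c x ≠ c y) ∧ ∃ y ∈ R, r y x ∧ c x ∈ win D (c y)) (x y : ι) : r x y := by
  have hJ := Nat.mul_pos h.pos h.pos
  let i : Fin d := ⟨0, by omega⟩
  let j : Fin d := ⟨1, by omega⟩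
  have hij : i ≠ j := Fin.ne_of_val_ne zero_ne_one
  have hclean : ∀ v, ∃ z, r v z ∧ Clean good i J (c z) := fun v => by
    obtain ⟨R, hcard, hinj, hR⟩ := exists_injOn_cluster v (fun R hRne hRcard hR =>
      hgrow (c v) R hRne hRcard fun y hy => win_subset_win (by omega) _ (hR y hy))
      (J * J - 1) (by omega)
    obtain ⟨z, hz, hzclean⟩ := h.exists_clean_of_injOn hinj (by omega)
      (by have := Nat.mul_le_mul_right D (Nat.sub_le (J * J) 1); omega)
      (fun y hy => (hR y hy).2) i
    exact ⟨z, (hR z hz).1, hzclean⟩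
  obtain ⟨x', hxx', hx'⟩ := hclean x
  obtain ⟨y', hyy', hy'⟩ := hclean y
  exact r.trans (r.trans hxx' (h.rel_of_clean hq (by omega) hij hne hgood hx' hy')) (r.symm hyy')

end Renormalisation

section Cells

variable {q : ℕ}

/-- The integer vector `z` as a point of Euclidean space. -/
def intVec (z : Fin d → ℤ) : EuclideanSpace ℝ (Fin d) :=
  (WithLp.equiv 2 (Fin d → ℝ)).symm fun i => (z i : ℝ)

/-- The upper corner of the cell of the unit lattice which contains `x`. -/
def ceilVec (x : EuclideanSpace ℝ (Fin d)) : Fin d → ℤ := fun i => ⌈x i⌉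

/-- The centred representative of a cell of the discrete torus, a section of `toTorus`. -/
def ofTorus (x : Fin d → ZMod q) : Fin d → ℤ := fun i => (x i).valMinAbs

/-- The cell of the subdivision of the torus into `q ^ d` cubes which contains `x`. -/
def label (q : ℕ) (x : EuclideanSpace ℝ (Fin d)) : Fin d → ZMod q :=
  toTorus q (ceilVec ((q : ℝ) • x + WithLp.toLp 2 fun _ => (q : ℝ) / 2))

theorem norm_le_sqrt_of_abs_le_one {x : EuclideanSpace ℝ (Fin d)} (h : ∀ i, |x i| ≤ 1) :
    ‖x‖ ≤ √d := by
  rw [EuclideanSpace.norm_eq]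
  refine Real.sqrt_le_sqrt ?_
  calc ∑ i, ‖x i‖ ^ 2 ≤ ∑ _i : Fin d, (1 : ℝ) :=
        Finset.sum_le_sum fun i _ => pow_le_one₀ (norm_nonneg _) (h i)
    _ = d := by simp

theorem norm_intVec_ceilVec_sub_sub_le (x y : EuclideanSpace ℝ (Fin d)) :
    ‖intVec (ceilVec x - ceilVec y) - (x - y)‖ ≤ √d := by
  refine norm_le_sqrt_of_abs_le_one fun i => ?_
  have := Int.ceil_lt_add_one (x i)
  have := Int.le_ceil (x i)
  have := Int.ceil_lt_add_one (y i)
  have := Int.le_ceil (y i)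
  simp only [intVec, ceilVec, Pi.sub_apply, Int.cast_sub, WithLp.equiv_symm_apply, PiLp.sub_apply,
    abs_le]
  constructor <;> linarith

theorem norm_intVec_ceilVec_sub_le (x : EuclideanSpace ℝ (Fin d)) :
    ‖intVec (ceilVec x) - x‖ ≤ √d := by
  have hzero : ceilVec (0 : EuclideanSpace ℝ (Fin d)) = 0 := funext fun _ => Int.ceil_zero
  simpa only [hzero, sub_zero] using norm_intVec_ceilVec_sub_sub_le x 0

theorem measurable_ceilVec : Measurable (ceilVec : EuclideanSpace ℝ (Fin d) → Fin d → ℤ) :=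
  measurable_pi_lambda _ fun _ => Int.measurable_ceil.comp (by fun_prop)

theorem volume_ceilVec_preimage (k : Fin d → ℤ) : volume (ceilVec ⁻¹' {k}) = 1 := by
  have hbox : ceilVec ⁻¹' {k} = (WithLp.ofLp : EuclideanSpace ℝ (Fin d) → _) ⁻¹'
      Set.pi univ fun i => Ioc (k i - 1 : ℝ) (k i) := by
    ext x
    simp [funext_iff, ceilVec, Int.ceil_eq_iff]
  rw [hbox, (PiLp.volume_preserving_ofLp (Fin d)).measure_preimage
    (MeasurableSet.univ_pi fun _ => measurableSet_Ioc).nullMeasurableSet, volume_pi_pi]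
  simp

theorem volume_ceilVec_smul_add_preimage {s : ℝ} (hs : 0 < s) (v : EuclideanSpace ℝ (Fin d))
    (k : Fin d → ℤ) :
    volume ((fun x => ceilVec (s • x + v)) ⁻¹' {k}) = ENNReal.ofReal (s ^ d)⁻¹ := by
  have hcomp : (fun x => ceilVec (s • x + v)) ⁻¹' {k} =
      (s • ·) ⁻¹' ((· + v) ⁻¹' (ceilVec ⁻¹' {k})) := rfl
  rw [hcomp, Measure.addHaar_preimage_smul _ hs.ne', measure_preimage_add_right,
    volume_ceilVec_preimage, mul_one, finrank_euclideanSpace_fin, abs_of_nonneg (by positivity)]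

theorem toTorus_ofTorus (x : Fin d → ZMod q) : toTorus q (ofTorus x) = x :=
  funext fun i => ZMod.coe_valMinAbs (x i)

theorem ofTorus_toTorus [NeZero q] {z : Fin d → ℤ} (hz : ∀ i, 2 * |z i| < q) :
    ofTorus (toTorus q z) = z := by
  funext i
  refine (ZMod.valMinAbs_spec _ _).2 ⟨rfl, ?_⟩
  have := hz i
  constructor <;> cases abs_cases (z i) <;> omega

theorem isEquitable_label [NeZero q] : IsEquitable (label (d := d) q) where
  measurable := (measurable_of_countable (toTorus q)).comp
    (measurable_ceilVec.comp ((measurable_id.const_smul (q : ℝ)).add_const _))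
  volume_le a := by
    have hq : (0 : ℝ) < q := by exact_mod_cast NeZero.pos q
    rcases (label q ⁻¹' {a} ∩ cube d).eq_empty_or_nonempty with hempty | ⟨x₀, hx₀, hx₀c⟩
    · rw [hempty, measureReal_empty]
      positivity
    have hrange : ∀ x ∈ cube d, ∀ i, 0 < ⌈(q : ℝ) * x i + q / 2⌉ ∧
        ⌈(q : ℝ) * x i + q / 2⌉ ≤ q := fun x hx i => by
      obtain ⟨hlower, hupper⟩ := hx i
      refine ⟨Int.ceil_pos.2 (by nlinarith), Int.ceil_le.2 ?_⟩
      push_cast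
      nlinarith
    set v : EuclideanSpace ℝ (Fin d) := WithLp.toLp 2 fun _ => (q : ℝ) / 2
    have hsub : label q ⁻¹' {a} ∩ cube d ⊆
        (fun x => ceilVec ((q : ℝ) • x + v)) ⁻¹' {ceilVec ((q : ℝ) • x₀ + v)} := by
      rintro x ⟨hx, hxc⟩
      refine funext fun i => sub_eq_zero.1 (Int.eq_zero_of_abs_lt_dvd
        ((ZMod.intCast_eq_intCast_iff_dvd_sub _ _ _).1
          (congrFun ((mem_singleton_iff.1 hx₀).trans (mem_singleton_iff.1 hx).symm) i)) ?_)
      have h₀ := hrange x₀ hx₀c i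
      have h := hrange x hxc i
      simp only [ceilVec, v, PiLp.add_apply, PiLp.smul_apply, smul_eq_mul, abs_lt]
      constructor <;> omega
    have hvol := volume_ceilVec_smul_add_preimage hq v (ceilVec ((q : ℝ) • x₀ + v))
    calc volume.real (label q ⁻¹' {a} ∩ cube d)
        ≤ ((q : ℝ) ^ d)⁻¹ := ENNReal.toReal_le_of_le_ofReal (by positivity)
          ((measure_mono hsub).trans_eq hvol)
      _ = _ := by simp [ZMod.card]

theorem torusDist_nonneg (x y : EuclideanSpace ℝ (Fin d)) : 0 ≤ torusDist x y :=
  Real.iInf_nonneg fun _ => norm_nonneg _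

theorem torusDist_comm (x y : EuclideanSpace ℝ (Fin d)) : torusDist x y = torusDist y x := by
  refine (Equiv.neg (Fin d → ℤ)).iInf_congr fun z => ?_
  rw [← norm_neg]
  congr 1
  ext i
  simp only [Equiv.neg_apply, Pi.neg_apply, Int.cast_neg, WithLp.equiv_symm_apply, PiLp.sub_apply,
    PiLp.neg_apply]
  ring

theorem torusDist_le_norm_sub_intVec (x y : EuclideanSpace ℝ (Fin d)) (z : Fin d → ℤ) :
    torusDist x y ≤ ‖x - y - intVec z‖ :=
  ciInf_le ⟨0, forall_mem_range.2 fun _ => norm_nonneg _⟩ z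

theorem torusDist_le_label_sub [NeZero q] (x y : EuclideanSpace ℝ (Fin d)) :
    torusDist x y ≤ (‖intVec (ofTorus (label q x - label q y))‖ + √d) / q := by
  have hq : (0 : ℝ) < q := by exact_mod_cast NeZero.pos q
  set v : EuclideanSpace ℝ (Fin d) := WithLp.toLp 2 fun _ => (q : ℝ) / 2
  set k := ceilVec ((q : ℝ) • x + v) - ceilVec ((q : ℝ) • y + v)
  set z := ofTorus (label q x - label q y)
  have hz : toTorus q z = toTorus q k := by
    rw [toTorus_ofTorus, label, label, sub_eq_add_neg, ← toTorus_neg, ← toTorus_add,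
      ← sub_eq_add_neg]
  choose s hs using fun i => (ZMod.intCast_eq_intCast_iff_dvd_sub _ _ _).1 (congrFun hz i)
  have hsplit : (q : ℝ) • (x - y - intVec s) =
      intVec z - (intVec k - ((q : ℝ) • x + v - ((q : ℝ) • y + v))) := by
    ext i
    have hsi : (k i : ℝ) - z i = q * s i := by exact_mod_cast hs i
    simp only [intVec, WithLp.equiv_symm_apply, PiLp.sub_apply, PiLp.add_apply, PiLp.smul_apply,
      smul_eq_mul]
    linarith
  rw [le_div_iff₀ hq]
  calc torusDist x y * q ≤ ‖x - y - intVec s‖ * q := by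
        gcongr
        exact torusDist_le_norm_sub_intVec x y s
    _ = ‖(q : ℝ) • (x - y - intVec s)‖ := by
        rw [norm_smul, Real.norm_of_nonneg hq.le, mul_comm]
    _ ≤ ‖intVec z‖ + √d := by
        rw [hsplit]
        exact (norm_sub_le _ _).trans (by gcongr; exact norm_intVec_ceilVec_sub_sub_le _ _)

theorem adj_symm {M : Model d P} {n : ℕ} {r : ℝ} {ω : Ω} {i j : ℕ} (h : adj M n r ω i j) :
    adj M n r ω j i := by
  obtain ⟨hne, hi, hj, hiN, hjN, hU⟩ := h
  exact ⟨hne.symm, hj, hi, hjN, hiN, by rwa [min_comm, max_comm, torusDist_comm]⟩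

end Cells

section Kernel

variable {g : ℝ → ℝ} {η : ℝ} {D q : ℕ}

/-- The connection function on the lattice of mesh `η`, truncated to `box d D`. The summand `√d`
accounts for the diameter of a cell, so that the kernel underestimates the connection
probabilities of the points in two cells. -/
def latticeKernel (g : ℝ → ℝ) (η : ℝ) (D : ℕ) (z : Fin d → ℤ) : ℝ :=
  if z ∈ box d D then g (η * (‖intVec z‖ + √d)) else 0

/-- The lattice kernel wrapped around the discrete torus. -/
def torusKernel (g : ℝ → ℝ) (η : ℝ) (D q : ℕ) (x : Fin d → ZMod q) : ℝ :=
  latticeKernel g η D (ofTorus x)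

theorem zero_le_mul_norm_intVec_add_sqrt (hη : 0 ≤ η) (z : Fin d → ℤ) :
    0 ≤ η * (‖intVec z‖ + √d) := by
  positivity

theorem latticeKernel_mem_Icc (hg : ∀ r, 0 ≤ r → g r ∈ Icc (0 : ℝ) 1) (hη : 0 ≤ η)
    (z : Fin d → ℤ) : latticeKernel g η D z ∈ Icc (0 : ℝ) 1 := by
  unfold latticeKernel
  split_ifs
  · exact hg _ (zero_le_mul_norm_intVec_add_sqrt hη z)
  · exact ⟨le_rfl, zero_le_one⟩

theorem torusKernel_le_torusKernel_zero (hg : ∀ r, 0 ≤ r → g r ∈ Icc (0 : ℝ) 1)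
    (hanti : AntitoneOn g (Ici 0)) (hη : 0 ≤ η) (x : Fin d → ZMod q) :
    torusKernel g η D q x ≤ torusKernel g η D q (0 : Fin d → ZMod q) := by
  have hofTorus : ofTorus (0 : Fin d → ZMod q) = 0 := funext fun _ => ZMod.valMinAbs_zero q
  have hintVec : intVec (0 : Fin d → ℤ) = 0 := by ext; simp [intVec]
  have hzero : torusKernel g η D q (0 : Fin d → ZMod q) = g (η * (0 + √d)) := by
    rw [torusKernel, hofTorus, latticeKernel, if_pos (mem_box.2 fun i => by simp), hintVec,
      norm_zero]
  rw [hzero, torusKernel, latticeKernel]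
  split_ifs
  · refine hanti (mem_Ici.2 (by positivity)) (mem_Ici.2 (zero_le_mul_norm_intVec_add_sqrt hη _)) ?_
    gcongr
    exact norm_nonneg _
  · exact (hg _ (by positivity)).1

theorem mem_win_of_torusKernel_pos {x : Fin d → ZMod q} (h : 0 < torusKernel g η D q x) :
    x ∈ win D 0 := by
  rw [torusKernel, latticeKernel] at h
  split_ifs at h with hbox
  · exact mem_win.2 ⟨_, hbox, by rw [toTorus_ofTorus, zero_add]⟩
  · exact h.false.elim

theorem two_mul_abs_lt_of_mem_box (hq : 2 * D < q) {z : Fin d → ℤ} (hz : z ∈ box d D) (i : Fin d) :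
    2 * |z i| < q := by
  have := mem_box.1 hz i
  omega

theorem le_torusKernel_of_mem_win (hanti : AntitoneOn g (Ici 0)) (hη : 0 ≤ η) (hD : 1 ≤ D)
    (hq : 2 < q) {x : Fin d → ZMod q} (hx : x ∈ win 1 0) :
    g (η * (√d + √d)) ≤ torusKernel g η D q x := by
  have : NeZero q := ⟨by omega⟩
  obtain ⟨z, hz, rfl⟩ := mem_win.1 hx
  have hnorm : ‖intVec z‖ ≤ √d := norm_le_sqrt_of_abs_le_one fun i => by
    have := mem_box.1 hz i
    simp only [intVec, WithLp.equiv_symm_apply]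
    exact_mod_cast this
  rw [zero_add, torusKernel, ofTorus_toTorus (two_mul_abs_lt_of_mem_box hq hz), latticeKernel,
    if_pos (mem_box.2 fun i => (mem_box.1 hz i).trans (by exact_mod_cast hD))]
  exact hanti (mem_Ici.2 (zero_le_mul_norm_intVec_add_sqrt hη z)) (mem_Ici.2 (by positivity))
    (by gcongr)

theorem sum_latticeKernel_le_sum_torusKernel [NeZero q]
    (hg : ∀ r, 0 ≤ r → g r ∈ Icc (0 : ℝ) 1) (hη : 0 ≤ η) (hq : 2 * D < q) :
    ∑ z ∈ (box d D).erase 0, latticeKernel g η D z ≤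
      ∑ x ∈ Finset.univ.erase (0 : Fin d → ZMod q), torusKernel g η D q x := by
  have hinv : ∀ z ∈ box d D, ofTorus (toTorus q z) = z := fun z hz =>
    ofTorus_toTorus (two_mul_abs_lt_of_mem_box hq hz)
  have hinj : Set.InjOn (toTorus (d := d) q) ((box d D).erase 0) := by
    intro z hz y hy h
    rw [← hinv z (Finset.mem_of_mem_erase hz), h, hinv y (Finset.mem_of_mem_erase hy)]
  calc ∑ z ∈ (box d D).erase 0, latticeKernel g η D z
      = ∑ z ∈ (box d D).erase 0, torusKernel g η D q (toTorus q z) :=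
        Finset.sum_congr rfl fun z hz => by
          rw [torusKernel, hinv z (Finset.mem_of_mem_erase hz)]
    _ = ∑ x ∈ ((box d D).erase 0).image (toTorus q), torusKernel g η D q x :=
        (Finset.sum_image hinj).symm
    _ ≤ _ := by
        refine Finset.sum_le_sum_of_subset_of_nonneg (fun x hx => ?_) fun x _ _ =>
          (latticeKernel_mem_Icc hg hη _).1
        obtain ⟨z, hz, rfl⟩ := Finset.mem_image.1 hx
        refine Finset.mem_erase.2 ⟨fun h => Finset.ne_of_mem_erase hz ?_, Finset.mem_univ _⟩
        rw [← hinv z (Finset.mem_of_mem_erase hz), h]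
        exact funext fun _ => ZMod.valMinAbs_zero q

theorem CoarseAdj.adj [NeZero q] {M : Model d P} {n : ℕ} {r : ℝ} (hr : 0 < r) (hη : 0 ≤ η)
    (hq : 1 ≤ η * r * q) {ω : Ω} {i j : ℕ} (hij : i ≠ j) (hi : i ∈ Finset.Icc 1 (M.N n ω))
    (hj : j ∈ Finset.Icc 1 (M.N n ω))
    (h : CoarseAdj M (label q) (torusKernel M.g η D q) ω i j) : adj M n r ω i j := by
  rw [Finset.mem_Icc] at hi hj
  have hq₀ : (0 : ℝ) < q := by exact_mod_cast NeZero.pos q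
  obtain ⟨hnonneg, hlt⟩ := h
  refine ⟨hij, hi.1, hj.1, hi.2, hj.2, hlt.le.trans ?_⟩
  rw [torusKernel, latticeKernel] at hlt ⊢
  split_ifs at hlt ⊢
  swap
  · exact absurd hlt hnonneg.not_gt
  set ρ := ‖intVec (ofTorus (label q (M.X i ω) - label q (M.X j ω)))‖ + √d
  have hdist : torusDist (M.X i ω) (M.X j ω) ≤ ρ / q := torusDist_le_label_sub _ _
  refine M.g_antitone (mem_Ici.2 (div_nonneg (torusDist_nonneg _ _) hr.le))
    (mem_Ici.2 (zero_le_mul_norm_intVec_add_sqrt hη _)) ?_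
  rw [div_le_iff₀ hr]
  refine hdist.trans ((div_le_iff₀ hq₀).2 ?_)
  calc ρ = 1 * ρ := (one_mul ρ).symm
    _ ≤ η * r * q * ρ := by gcongr
    _ = η * ρ * r * q := by ring

end Kernel

section Discretisation

theorem exists_pos_of_integral_norm_pos [NeZero d] {g : ℝ → ℝ}
    (h : 0 < ∫ x : EuclideanSpace ℝ (Fin d), g ‖x‖) : ∃ s : ℝ, 0 < s ∧ 0 < g s := by
  by_contra! hcon
  refine h.not_ge (integral_nonpos_of_ae ?_)
  filter_upwards [Measure.ae_ne volume (0 : EuclideanSpace ℝ (Fin d))] with x hx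
  exact hcon _ (norm_pos_iff.2 hx)

theorem integral_comp_mul_norm (g : ℝ → ℝ) {t : ℝ} (ht : 0 ≤ t) :
    ∫ x : EuclideanSpace ℝ (Fin d), g (t * ‖x‖) =
      (t ^ d)⁻¹ * ∫ x : EuclideanSpace ℝ (Fin d), g ‖x‖ := by
  have hscale := Measure.integral_comp_smul_of_nonneg volume
    (fun x : EuclideanSpace ℝ (Fin d) => g ‖x‖) t (hR := ht)
  simpa only [norm_smul, Real.norm_of_nonneg ht, finrank_euclideanSpace_fin, smul_eq_mul]
    using hscale

theorem integrable_comp_mul_norm {g : ℝ → ℝ} {t : ℝ} (ht : 0 < t)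
    (hg : Integrable fun x : EuclideanSpace ℝ (Fin d) => g ‖x‖) :
    Integrable fun x : EuclideanSpace ℝ (Fin d) => g (t * ‖x‖) := by
  simpa only [norm_smul, Real.norm_of_nonneg ht.le] using hg.comp_smul ht.ne'

/-- The points whose distance to the origin is between `a` and `b`. -/
def annulus (d : ℕ) (a b : ℝ) : Set (EuclideanSpace ℝ (Fin d)) := {x | a ≤ ‖x‖ ∧ ‖x‖ ≤ b}

theorem measurableSet_annulus (a b : ℝ) : MeasurableSet (annulus d a b) :=
  (measurableSet_le measurable_const measurable_norm).inter
    (measurableSet_le measurable_norm measurable_const)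

theorem aecover_annulus [NeZero d] :
    AECover volume atTop fun k : ℕ => annulus d ((k : ℝ) + 1)⁻¹ (k + 1) where
  ae_eventually_mem := by
    filter_upwards [Measure.ae_ne volume (0 : EuclideanSpace ℝ (Fin d))] with x hx
    have hlarge := tendsto_atTop_add_const_right atTop (1 : ℝ) tendsto_natCast_atTop_atTop
    filter_upwards [hlarge.eventually_ge_atTop ‖x‖⁻¹, hlarge.eventually_ge_atTop ‖x‖] with k hk hk'
    exact ⟨inv_le_of_inv_le₀ (norm_pos_iff.2 hx) hk, hk'⟩
  measurableSet _ := measurableSet_annulus _ _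

theorem exists_lt_setIntegral_annulus [NeZero d] {g : ℝ → ℝ} {m : ℝ}
    (hg : Integrable fun x : EuclideanSpace ℝ (Fin d) => g ‖x‖)
    (hm : m < ∫ x : EuclideanSpace ℝ (Fin d), g ‖x‖) :
    ∃ t > 1, ∃ a > 0, ∃ b, m < ∫ x in annulus d a b, g (t * ‖x‖) := by
  have hscale : Tendsto (fun t : ℝ => (t ^ d)⁻¹ * ∫ x : EuclideanSpace ℝ (Fin d), g ‖x‖)
      (nhdsWithin 1 (Ioi 1)) (nhds (∫ x : EuclideanSpace ℝ (Fin d), g ‖x‖)) := by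
    have hcont := (((continuous_pow d).tendsto (1 : ℝ)).inv₀ (by simp)).mul_const
      (∫ x : EuclideanSpace ℝ (Fin d), g ‖x‖)
    rw [one_pow, inv_one, one_mul] at hcont
    exact hcont.mono_left nhdsWithin_le_nhds
  obtain ⟨t, ht, hmt⟩ :=
    ((eventually_mem_nhdsWithin (s := Ioi (1 : ℝ))).and (hscale.eventually_const_lt hm)).exists
  have ht₀ : 0 < t := zero_lt_one.trans ht
  rw [← integral_comp_mul_norm g ht₀.le] at hmt
  obtain ⟨k, hk⟩ := ((aecover_annulus.integral_tendsto_of_countably_generated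
    (integrable_comp_mul_norm ht₀ hg)).eventually_const_lt hmt).exists
  exact ⟨t, ht, _, by positivity, _, hk⟩

theorem setIntegral_le_sum_measureReal_preimage_mul {α β : Type*} [MeasurableSpace α]
    {μ : Measure α} {f : α → ℝ} {A : Set α} (hA : MeasurableSet A) (hf : IntegrableOn f A μ)
    {c : α → β} {Z : Finset β} {κ : β → ℝ} (hκ : ∀ z ∈ Z, 0 ≤ κ z)
    (hmeas : ∀ z ∈ Z, MeasurableSet (c ⁻¹' {z})) (hfin : ∀ z ∈ Z, μ (c ⁻¹' {z}) ≠ ⊤)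
    (hcover : ∀ x ∈ A, c x ∈ Z ∧ f x ≤ κ (c x)) :
    ∫ x in A, f x ∂μ ≤ ∑ z ∈ Z, μ.real (c ⁻¹' {z}) * κ z := by
  have hcell : ∀ z ∈ Z, Integrable ((c ⁻¹' {z}).indicator fun _ => κ z) μ := fun z hz =>
    (integrable_indicator_iff (hmeas z hz)).2 (integrableOn_const (hfin z hz))
  have hnonneg : ∀ x, ∀ z ∈ Z, 0 ≤ (c ⁻¹' {z}).indicator (fun _ => κ z) x := fun x z hz =>
    indicator_nonneg (fun _ _ => hκ z hz) x
  rw [← integral_indicator hA]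
  calc ∫ x, A.indicator f x ∂μ
      ≤ ∫ x, ∑ z ∈ Z, (c ⁻¹' {z}).indicator (fun _ => κ z) x ∂μ := by
        refine integral_mono ((integrable_indicator_iff hA).2 hf) (integrable_finsetSum _ hcell)
          fun x => indicator_le' (fun x hx => ?_) (fun x _ => Finset.sum_nonneg (hnonneg x)) x
        obtain ⟨hxZ, hfx⟩ := hcover x hx
        refine hfx.trans (le_trans ?_ (Finset.single_le_sum (hnonneg x) hxZ))
        rw [indicator_of_mem (mem_preimage.2 (mem_singleton (c x)))]
    _ = ∑ z ∈ Z, μ.real (c ⁻¹' {z}) * κ z := by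
        rw [integral_finsetSum _ hcell]
        refine Finset.sum_congr rfl fun z hz => ?_
        rw [integral_indicator (hmeas z hz), setIntegral_const, smul_eq_mul]

variable {g : ℝ → ℝ} {η t a b : ℝ} {D : ℕ}

theorem norm_intVec_ceilVec_inv_smul_le (hη : 0 < η) (x : EuclideanSpace ℝ (Fin d)) :
    η * ‖intVec (ceilVec (η⁻¹ • x))‖ ≤ ‖x‖ + η * √d := by
  have hscale : η * ‖η⁻¹ • x‖ = ‖x‖ := by
    rw [norm_smul, norm_inv, Real.norm_of_nonneg hη.le, mul_inv_cancel_left₀ hη.ne']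
  rw [← hscale, ← mul_add]
  gcongr
  linarith [norm_sub_norm_le (intVec (ceilVec (η⁻¹ • x))) (η⁻¹ • x),
    norm_intVec_ceilVec_sub_le (η⁻¹ • x)]

theorem ceilVec_inv_smul_mem_box_erase (hη : 0 < η) (ha : η * √d < a) (hD : b / η + 1 ≤ D)
    {x : EuclideanSpace ℝ (Fin d)} (hx : x ∈ annulus d a b) :
    ceilVec (η⁻¹ • x) ∈ (box d D).erase 0 := by
  refine Finset.mem_erase.2 ⟨fun hzero => ?_, mem_box.2 fun i => ?_⟩
  · have hnorm := norm_intVec_ceilVec_sub_le (η⁻¹ • x)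
    have hintVec : intVec (0 : Fin d → ℤ) = 0 := by ext; simp [intVec]
    rw [hzero, hintVec, zero_sub, norm_neg, norm_smul, norm_inv, Real.norm_of_nonneg hη.le,
      inv_mul_le_iff₀ hη] at hnorm
    exact (hx.1.trans hnorm).not_gt ha
  · have hi : |η⁻¹ * x i| ≤ b / η := by
      rw [abs_mul, abs_of_pos (inv_pos.2 hη), inv_mul_eq_div]
      gcongr
      exact (PiLp.norm_apply_le x i).trans hx.2
    have hceil := Int.ceil_lt_add_one (η⁻¹ * x i)
    have hle := Int.le_ceil (η⁻¹ * x i)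
    rw [abs_le] at hi
    have habs : |((⌈η⁻¹ * x i⌉ : ℤ) : ℝ)| ≤ D := abs_le.2 ⟨by linarith, by linarith⟩
    exact_mod_cast habs

theorem comp_mul_norm_le_latticeKernel (hanti : AntitoneOn g (Ici 0)) (hη : 0 < η)
    (ha : η * √d < a) (hta : 2 * (η * √d) ≤ (t - 1) * a) (hD : b / η + 1 ≤ D) (ht : 1 ≤ t)
    {x : EuclideanSpace ℝ (Fin d)} (hx : x ∈ annulus d a b) :
    g (t * ‖x‖) ≤ latticeKernel g η D (ceilVec (η⁻¹ • x)) := by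
  rw [latticeKernel,
    if_pos (Finset.mem_of_mem_erase (ceilVec_inv_smul_mem_box_erase hη ha hD hx))]
  refine hanti (mem_Ici.2 (zero_le_mul_norm_intVec_add_sqrt hη.le _))
    (mem_Ici.2 (by positivity)) ?_
  have hgap : (t - 1) * a ≤ (t - 1) * ‖x‖ := mul_le_mul_of_nonneg_left hx.1 (sub_nonneg.2 ht)
  linarith [norm_intVec_ceilVec_inv_smul_le hη x]

theorem setIntegral_annulus_le_sum_latticeKernel (hanti : AntitoneOn g (Ici 0))
    (hg : ∀ r, 0 ≤ r → g r ∈ Icc (0 : ℝ) 1)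
    (hint : Integrable fun x : EuclideanSpace ℝ (Fin d) => g (t * ‖x‖)) (hη : 0 < η)
    (ha : η * √d < a) (hta : 2 * (η * √d) ≤ (t - 1) * a) (hD : b / η + 1 ≤ D) (ht : 1 ≤ t) :
    ∫ x in annulus d a b, g (t * ‖x‖) ≤
      η ^ d * ∑ z ∈ (box d D).erase 0, latticeKernel g η D z := by
  have hvol : ∀ z : Fin d → ℤ, volume ((fun x => ceilVec (η⁻¹ • x)) ⁻¹' {z}) =
      ENNReal.ofReal (η ^ d) := fun z => by
    simpa only [add_zero, inv_pow, inv_inv] using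
      volume_ceilVec_smul_add_preimage (inv_pos.2 hη) 0 z
  have hle := setIntegral_le_sum_measureReal_preimage_mul (measurableSet_annulus a b)
    hint.integrableOn (fun z _ => (latticeKernel_mem_Icc hg hη.le z).1)
    (fun z _ => measurable_ceilVec.comp (measurable_const_smul η⁻¹) (measurableSet_singleton z))
    (fun z _ => (hvol z).trans_ne ENNReal.ofReal_ne_top) fun x hx =>
      ⟨ceilVec_inv_smul_mem_box_erase hη ha hD hx,
        comp_mul_norm_le_latticeKernel hanti hη ha hta hD ht hx⟩
  refine hle.trans_eq ?_
  rw [Finset.mul_sum]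
  refine Finset.sum_congr rfl fun z _ => ?_
  rw [measureReal_def]
  exact congrArg (· * _) ((congrArg _ (hvol z)).trans (ENNReal.toReal_ofReal (by positivity)))

theorem exists_lt_sum_latticeKernel [NeZero d] (hanti : AntitoneOn g (Ici 0))
    (hg : ∀ r, 0 ≤ r → g r ∈ Icc (0 : ℝ) 1)
    (hint : Integrable fun x : EuclideanSpace ℝ (Fin d) => g ‖x‖) {m : ℝ} (hm₀ : 0 ≤ m)
    (hm : m < ∫ x : EuclideanSpace ℝ (Fin d), g ‖x‖) :
    ∃ η > 0, ∃ D : ℕ, 1 ≤ D ∧ 0 < g (η * (√d + √d)) ∧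
      m < η ^ d * ∑ z ∈ (box d D).erase 0, latticeKernel g η D z := by
  obtain ⟨s, hs, hgs⟩ := exists_pos_of_integral_norm_pos (hm₀.trans_lt hm)
  obtain ⟨t, ht, a, ha, b, hab⟩ := exists_lt_setIntegral_annulus hint hm
  have hd : 0 < √(d : ℝ) := Real.sqrt_pos.2 (by exact_mod_cast NeZero.pos d)
  have hsmall : ∀ᶠ η : ℝ in nhdsWithin 0 (Ioi 0),
      η * √d < a ∧ 2 * (η * √d) ≤ (t - 1) * a ∧ η * (√d + √d) ≤ s := by
    have hlim : ∀ c : ℝ, Tendsto (fun η : ℝ => η * c) (nhdsWithin 0 (Ioi 0)) (nhds 0) := fun c =>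
      (((continuous_mul_const c).tendsto 0).mono_left nhdsWithin_le_nhds).trans_eq
        (by rw [zero_mul])
    have hta : 0 < (t - 1) * a / 2 := by
      have := sub_pos.2 ht
      positivity
    filter_upwards [(hlim √d).eventually_lt_const ha, (hlim √d).eventually_lt_const hta,
      (hlim (√d + √d)).eventually_lt_const hs] with η h₁ h₂ h₃
    exact ⟨h₁, by linarith, h₃.le⟩
  obtain ⟨η, hη, hηa, hηt, hηs⟩ := (eventually_mem_nhdsWithin.and hsmall).exists
  rw [mem_Ioi] at hη
  obtain ⟨D, hD⟩ := exists_nat_ge (max (b / η + 1) 1)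
  refine ⟨η, hη, D, by exact_mod_cast (le_max_right _ _).trans hD,
    hgs.trans_le (hanti (mem_Ici.2 (by positivity)) (mem_Ici.2 hs.le) hηs), ?_⟩
  exact hab.trans_le (setIntegral_annulus_le_sum_latticeKernel hanti hg
    (integrable_comp_mul_norm (zero_lt_one.trans ht) hint) hη hηa hηt
    ((le_max_left _ _).trans hD) ht.le)

end Discretisation

section Connectivity

variable {D J w q : ℕ} {p : ℝ} {κ : (Fin d → ZMod q) → ℝ}
  {L : EuclideanSpace ℝ (Fin d) → Fin d → ZMod q}

theorem card_torus [NeZero q] : (Fintype.card (Fin d → ZMod q) : ℝ) = (q : ℝ) ^ d := by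
  simp [ZMod.card]

/-- Kernels on the discrete torus which take values in `[0, 1]`, are largest at `0`, have range `D`,
and are at least `p` between neighbouring cells. -/
structure IsCellKernel (κ : (Fin d → ZMod q) → ℝ) (D : ℕ) (p : ℝ) : Prop where
  mem_Icc : ∀ x, κ x ∈ Icc (0 : ℝ) 1
  le_zero : ∀ x, κ x ≤ κ 0
  mem_win : ∀ x, 0 < κ x → x ∈ win D 0
  le_of_mem_win : ∀ x ∈ win 1 0, p ≤ κ x

theorem isCellKernel_torusKernel {g : ℝ → ℝ} {η : ℝ} (hg : ∀ r, 0 ≤ r → g r ∈ Icc (0 : ℝ) 1)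
    (hanti : AntitoneOn g (Ici 0)) (hη : 0 ≤ η) (hD : 1 ≤ D) (hq : 2 < q) :
    IsCellKernel (torusKernel (d := d) g η D q) D (g (η * (√d + √d))) where
  mem_Icc _ := latticeKernel_mem_Icc hg hη _
  le_zero := torusKernel_le_torusKernel_zero hg hanti hη
  mem_win _ := mem_win_of_torusKernel_pos
  le_of_mem_win _ := le_torusKernel_of_mem_win hanti hη hD hq

namespace IsCellKernel

theorem card_filter_pos_le [NeZero q] (hκ : IsCellKernel κ D p) :
    (Finset.univ.filter fun x => 0 < κ x).card ≤ (2 * D + 1) ^ d :=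
  (Finset.card_le_card fun x hx => hκ.mem_win x (Finset.mem_filter.1 hx).2).trans (card_win_le D 0)

theorem le_sub_of_mem_win (hκ : IsCellKernel κ D p) {a b : Fin d → ZMod q} (h : b ∈ win 1 a) :
    p ≤ κ (a - b) :=
  hκ.le_of_mem_win _ (sub_mem_win_zero.2 (mem_win_comm.1 h))

theorem mem_win_of_sub_pos (hκ : IsCellKernel κ D p) {a b : Fin d → ZMod q} (h : 0 < κ (a - b)) :
    a ∈ win D b :=
  sub_mem_win_zero.1 (hκ.mem_win _ h)

theorem connectedGraph_of_sparseBad {M : Model d P} {n : ℕ} {r : ℝ} {ω : Ω}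
    (hκ : IsCellKernel κ D p) (hd : 2 ≤ d) (hq : 2 * J ≤ q) (hw : J * J * D + 3 * J ≤ w)
    (hadj : ∀ x ∈ Finset.Icc 1 (M.N n ω), ∀ y ∈ Finset.Icc 1 (M.N n ω), x ≠ y →
      CoarseAdj M L κ ω x y → adj M n r ω x y)
    (hstag : ∀ o, ∀ R ⊆ Finset.Icc 1 (M.N n ω), R.card ≤ J * J →
      (∀ y ∈ R, L (M.X y ω) ∈ win w o) → R.Nonempty → ¬ Stagnant M L κ (M.N n ω) R ω)
    (hbad : SparseBad (fun a => ¬ BadCell M L κ p (M.N n ω) ω a) w J) :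
    connectedGraph M n r ω := by
  classical
  have : Std.Symm (adj M n r ω) := ⟨fun _ _ h => adj_symm h⟩
  let s : Setoid ℕ := ⟨Relation.ReflTransGen (adj M n r ω), fun _ => .refl,
    fun h => Relation.ReflTransGen.stdSymm.symm _ _ h, fun h h' => h.trans h'⟩
  suffices h : ∀ x y : Finset.Icc 1 (M.N n ω), s.comap Subtype.val x y from
    fun i j hi hi' hj hj' => h ⟨i, Finset.mem_Icc.2 ⟨hi, hi'⟩⟩ ⟨j, Finset.mem_Icc.2 ⟨hj, hj'⟩⟩
  refine hbad.rel (c := fun x : Finset.Icc 1 (M.N n ω) => L (M.X x ω)) (D := D) hd hq hw ?_ ?_ ?_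
  · intro a ha
    obtain ⟨x, hx, hxa⟩ := exists_label_eq_of_not_badCell ha
    exact ⟨⟨x, hx⟩, hxa⟩
  · rintro a ha ⟨x, hx⟩ ⟨y, hy⟩ hxa hya
    obtain ⟨z, hz, hzF, hadjz⟩ := exists_coarseAdj_of_not_badCell ha (F := {x, y})
      (Finset.insert_subset hx (Finset.singleton_subset_iff.2 hy)) Finset.card_le_two
      (by simpa using ⟨hκ.le_sub_of_mem_win hxa, hκ.le_sub_of_mem_win hya⟩)
    have hjoin : ∀ t ∈ Finset.Icc 1 (M.N n ω), t ∈ ({x, y} : Finset ℕ) → adj M n r ω z t :=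
      fun t ht htF => hadj z hz t ht (fun h => hzF (h ▸ htF)) (hadjz t htF)
    exact (Relation.ReflTransGen.single (adj_symm (hjoin x hx (by simp)))).tail
      (hjoin y hy (by simp))
  · intro o R hRne hRcard hRw
    have hgrow := hstag o (R.map ⟨_, Subtype.val_injective⟩) (Finset.map_subtype_subset R)
      (by simpa using hRcard.le) (by simpa using hRw) (by simpa using hRne)
    simp only [Stagnant, not_forall, not_not] at hgrow
    obtain ⟨x, hx, hxR, y', hy', hxy⟩ := hgrow
    obtain ⟨y, hy, rfl⟩ := Finset.mem_map.1 hy'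
    refine ⟨⟨x, hx⟩, fun z hz => hxR z (Finset.mem_map_of_mem _ hz), y, hy, ?_, ?_⟩
    · exact .single (adj_symm (hadj x hx y y.2 (fun h => hxR y hy' (by rw [h])) hxy))
    · exact hκ.mem_win_of_sub_pos (hxy.1.trans_lt hxy.2)

theorem measureReal_exists_stagnant_win_le [NeZero q] (hκ : IsCellKernel κ D p) (M : Model d P)
    (hL : IsEquitable L) (n m : ℕ) {K : ℕ}
    (hq : ∀ l, l.Prime → l ∣ q → K + (2 * D + 1) ^ d ≤ l) {σ : ℝ} (hσ : 0 ≤ σ)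
    (hσκ : σ ≤ ∑ x ∈ Finset.univ.erase 0, κ x) (hJK : J * J ≤ K) (o : Fin d → ZMod q) :
    P.real {ω | M.N n ω = m ∧ ∃ R ⊆ Finset.Icc 1 m, R.card ≤ J * J ∧
      (∀ r ∈ R, L (M.X r ω) ∈ win w o) ∧ R.Nonempty ∧ Stagnant M L κ m R ω} ≤
    P.real {ω | M.N n ω = m} * Real.exp (-(σ / (q : ℝ) ^ d * (m - K))) *
      (1 + m * ((2 * (w + D) + 1) ^ d / (q : ℝ) ^ d)) ^ K := by
  have hP : IsProbabilityMeasure P := M.U_indep.isProbabilityMeasure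
  have hord : ((K + (Finset.univ.filter fun x => 0 < κ x).card : ℕ) : ℕ∞) ≤
      AddMonoid.minOrder (Fin d → ZMod q) :=
    (Nat.cast_le.2 (Nat.add_le_add_left hκ.card_filter_pos_le K)).trans (le_minOrder_pi_zmod hq)
  have hwin : ((win w o).card : ℝ) ≤ (2 * (w + D) + 1) ^ d := by
    exact_mod_cast (Finset.card_le_card (win_subset_win (Nat.le_add_right w D) o)).trans
      (card_win_le (w + D) o)
  have hbound := measureReal_exists_stagnant_le M hL n m K hκ.mem_Icc hκ.le_zero hord hσ hσκ
    (win w o)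
  rw [card_torus] at hbound
  refine ((measureReal_mono ?_ (measure_ne_top _ _)).trans hbound).trans (by gcongr)
  rintro ω ⟨hN, R, hR, hRJ, hstag⟩
  exact ⟨hN, R, hR, hRJ.trans hJK, hstag⟩

theorem measureReal_exists_badCell_win_le [NeZero q] (hκ : IsCellKernel κ D p) (M : Model d P)
    (hL : IsEquitable L) (n m : ℕ) {K : ℕ} (hp : 0 < p) {σ : ℝ} (hσ : 0 ≤ σ)
    (hσJ : σ ≤ J * p ^ 2) (hJK : J * 2 ≤ K) (o : Fin d → ZMod q) :
    P.real {ω | M.N n ω = m ∧ ∃ T ⊆ win w o, T.card = J ∧ ∀ a ∈ T, BadCell M L κ p m ω a} ≤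
    2 ^ (2 * w + 1) ^ d * (2 ^ (K * J) * (P.real {ω | M.N n ω = m} *
      Real.exp (-(σ / (q : ℝ) ^ d * (m - K)))) *
      (1 + m * ((2 * (w + D) + 1) ^ d / (q : ℝ) ^ d)) ^ K) := by
  have hP : IsProbabilityMeasure P := M.U_indep.isProbabilityMeasure
  have hp' : p ∈ Icc (0 : ℝ) 1 :=
    ⟨hp.le, (hκ.le_of_mem_win 0 (self_mem_win 1 0)).trans (hκ.mem_Icc 0).2⟩
  have hwin : ((win (w + D) o).card : ℝ) ≤ (2 * (w + D) + 1) ^ d := by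
    exact_mod_cast card_win_le (w + D) o
  have hfix : ∀ T ∈ (win w o).powersetCard J,
      P.real {ω | M.N n ω = m ∧ ∀ a ∈ T, BadCell M L κ p m ω a} ≤
      2 ^ (K * J) * (P.real {ω | M.N n ω = m} * Real.exp (-(σ / (q : ℝ) ^ d * (m - K)))) *
      (1 + m * ((2 * (w + D) + 1) ^ d / (q : ℝ) ^ d)) ^ K := fun T hT => by
    obtain ⟨hTw, rfl⟩ := Finset.mem_powersetCard.1 hT
    have hbound := measureReal_forall_badCell_le M hL n m hκ.mem_Icc hp' hJK hσ hσJ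
      (W := win (w + D) o) fun a ha b hab =>
        mem_win_trans (hTw ha) (mem_win_comm.1 (hκ.mem_win_of_sub_pos (hp.trans_le hab)))
    rw [card_torus] at hbound
    exact hbound.trans (by gcongr)
  have hcount : (((win w o).powersetCard J).card : ℝ) ≤ 2 ^ (2 * w + 1) ^ d := by
    rw [Finset.card_powersetCard]
    exact_mod_cast (Nat.choose_le_two_pow _ _).trans
      (Nat.pow_le_pow_right two_pos (card_win_le w o))
  refine (measureReal_mono (s₂ := ⋃ T ∈ (win w o).powersetCard J,
    {ω | M.N n ω = m ∧ ∀ a ∈ T, BadCell M L κ p m ω a}) ?_ (measure_ne_top _ _)).trans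
    ((measureReal_biUnion_finset_le _ _).trans ((Finset.sum_le_card_nsmul _ _ _ hfix).trans ?_))
  · rintro ω ⟨hN, T, hTw, hTJ, hbad⟩
    exact Set.mem_biUnion (Finset.mem_powersetCard.2 ⟨hTw, hTJ⟩) ⟨hN, hbad⟩
  · rw [nsmul_eq_mul]
    gcongr

theorem measureReal_not_connectedGraph_le [NeZero q] (hκ : IsCellKernel κ D p) (M : Model d P)
    (hL : IsEquitable L) (hd : 2 ≤ d) {n : ℕ} {r : ℝ}
    (hadj : ∀ ω, ∀ x ∈ Finset.Icc 1 (M.N n ω), ∀ y ∈ Finset.Icc 1 (M.N n ω), x ≠ y →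
      CoarseAdj M L κ ω x y → adj M n r ω x y)
    (m : ℕ) (hp : 0 < p) {σ : ℝ} (hσ : 0 ≤ σ) (hσκ : σ ≤ ∑ x ∈ Finset.univ.erase 0, κ x)
    (hσJ : σ ≤ J * p ^ 2) {K : ℕ} (hJK : J * J + 2 * J ≤ K) (hqJ : 2 * J ≤ q)
    (hq : ∀ l, l.Prime → l ∣ q → K + (2 * D + 1) ^ d ≤ l) (hw : J * J * D + 3 * J ≤ w) :
    P.real {ω | M.N n ω = m ∧ ¬ connectedGraph M n r ω} ≤
    P.real {ω | M.N n ω = m} * ((1 + 2 ^ (2 * w + 1) ^ d * 2 ^ (K * J)) * ((q : ℝ) ^ d *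
      Real.exp (-(σ / (q : ℝ) ^ d * (m - K))) *
      (1 + m * ((2 * (w + D) + 1) ^ d / (q : ℝ) ^ d)) ^ K)) := by
  have hP : IsProbabilityMeasure P := M.U_indep.isProbabilityMeasure
  let A : (Fin d → ZMod q) → Set Ω := fun o => {ω | M.N n ω = m ∧ ∃ R ⊆ Finset.Icc 1 m,
    R.card ≤ J * J ∧ (∀ r ∈ R, L (M.X r ω) ∈ win w o) ∧ R.Nonempty ∧ Stagnant M L κ m R ω}
  let B : (Fin d → ZMod q) → Set Ω := fun o =>
    {ω | M.N n ω = m ∧ ∃ T ⊆ win w o, T.card = J ∧ ∀ a ∈ T, BadCell M L κ p m ω a}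
  have hcover : {ω | M.N n ω = m ∧ ¬ connectedGraph M n r ω} ⊆ ⋃ o, A o ∪ B o := by
    rintro ω ⟨rfl, hnot⟩
    by_contra hout
    simp only [Set.mem_iUnion, Set.mem_union, not_exists, not_or] at hout
    refine hnot (hκ.connectedGraph_of_sparseBad hd hqJ hw (hadj ω) (fun o R hR hRJ hRw hRne hstag =>
      (hout o).1 ⟨rfl, R, hR, hRJ, hRw, hRne, hstag⟩) fun o T hT hTbad => ?_)
    by_contra hJT
    obtain ⟨T', hT', hcard⟩ := Finset.exists_subset_card_eq (not_lt.1 hJT)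
    exact (hout o).2 ⟨rfl, T', hT'.trans hT, hcard, fun a ha => not_not.1 (hTbad a (hT' ha))⟩
  have hwin : ∀ o, P.real (A o ∪ B o) ≤ _ := fun o => (measureReal_union_le _ _).trans (add_le_add
    (hκ.measureReal_exists_stagnant_win_le M hL n m hq hσ hσκ (by omega) o)
    (hκ.measureReal_exists_badCell_win_le M hL n m hp hσ hσJ (K := K) (by omega) o))
  refine (measureReal_mono hcover (measure_ne_top _ _)).trans
    ((measureReal_iUnion_fintype_le _).trans
      ((Finset.sum_le_card_nsmul _ _ _ fun o _ => hwin o).trans_eq ?_))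
  rw [nsmul_eq_mul, Finset.card_univ, card_torus]
  ring

end IsCellKernel

end Connectivity

section Poisson

open scoped NNReal Nat

theorem hasSum_poisson_mgf (r : ℝ≥0) (t : ℝ) :
    HasSum (fun k : ℕ => Real.exp (-r) * r ^ k / k ! * Real.exp (t * k))
      (Real.exp (r * (Real.exp t - 1))) := by
  have h := (NormedSpace.expSeries_div_hasSum_exp (r * Real.exp t : ℝ)).mul_left (Real.exp (-r))
  rw [← Real.exp_eq_exp_ℝ, ← Real.exp_add] at h
  rw [mul_sub, mul_one, sub_eq_neg_add]
  refine h.congr_fun fun k => ?_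
  rw [mul_comm t, Real.exp_nat_mul, mul_pow]
  ring

theorem integrable_exp_mul_poissonMeasure (r : ℝ≥0) (t : ℝ) :
    Integrable (fun k : ℕ => Real.exp (t * k)) (poissonMeasure r) := by
  rw [integrable_poissonMeasure_iff]
  simpa only [Real.norm_eq_abs, Real.abs_exp] using (hasSum_poisson_mgf r t).summable

theorem mgf_natCast_poissonMeasure (r : ℝ≥0) (t : ℝ) :
    mgf (Nat.cast : ℕ → ℝ) (poissonMeasure r) t = Real.exp (r * (Real.exp t - 1)) := by
  rw [mgf, integral_poissonMeasure]
  exact (hasSum_poisson_mgf r t).tsum_eq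

theorem exp_mul_mgf_poissonMeasure_log (r : ℝ≥0) {a : ℝ} (ha : 0 < a) :
    Real.exp (-Real.log a * (a * r)) * mgf (Nat.cast : ℕ → ℝ) (poissonMeasure r) (Real.log a) =
      Real.exp (-(r * H a)) := by
  rw [mgf_natCast_poissonMeasure, Real.exp_log ha, ← Real.exp_add, H]
  ring_nf

theorem poissonMeasure_real_ge_le (r : ℝ≥0) {a : ℝ} (ha : 1 ≤ a) :
    (poissonMeasure r).real {k | a * r ≤ k} ≤ Real.exp (-(r * H a)) :=
  (measure_ge_le_exp_mul_mgf _ (Real.log_nonneg ha)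
    (integrable_exp_mul_poissonMeasure r _)).trans_eq
    (exp_mul_mgf_poissonMeasure_log r (one_pos.trans_le ha))

theorem poissonMeasure_real_le_le (r : ℝ≥0) {a : ℝ} (ha₀ : 0 < a) (ha₁ : a ≤ 1) :
    (poissonMeasure r).real {k | k ≤ a * r} ≤ Real.exp (-(r * H a)) :=
  (measure_le_le_exp_mul_mgf _ (Real.log_nonpos ha₀.le ha₁)
    (integrable_exp_mul_poissonMeasure r _)).trans_eq (exp_mul_mgf_poissonMeasure_log r ha₀)

theorem H_pos {a : ℝ} (ha₀ : 0 ≤ a) (ha₁ : a ≠ 1) : 0 < H a := by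
  have h : H a = InformationTheory.klFun a := by
    rw [H, InformationTheory.klFun_apply]
    ring
  rw [h]
  exact (InformationTheory.klFun_nonneg ha₀).lt_of_ne'
    (mt (InformationTheory.klFun_eq_zero_iff ha₀).1 ha₁)

theorem tendsto_poissonMeasure_real_compl_Icc {a b : ℝ} (ha₀ : 0 < a) (ha₁ : a < 1)
    (hb : 1 < b) :
    Tendsto (fun n : ℕ => (poissonMeasure n).real {k | a * n ≤ k ∧ k ≤ b * n}ᶜ) atTop
      (nhds 0) := by
  have htail : ∀ {x : ℝ}, 0 ≤ x → x ≠ 1 →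
      Tendsto (fun n : ℕ => Real.exp (-(n * H x))) atTop (nhds 0) := fun hx₀ hx₁ =>
    Real.tendsto_exp_neg_atTop_nhds_zero.comp
      (tendsto_natCast_atTop_atTop.atTop_mul_const (H_pos hx₀ hx₁))
  have h := (htail ha₀.le ha₁.ne).add (htail (one_pos.trans hb).le hb.ne')
  rw [add_zero] at h
  refine squeeze_zero (fun _ => measureReal_nonneg) (fun n => ?_) h
  have hsub : {k : ℕ | a * n ≤ k ∧ k ≤ b * n}ᶜ ⊆
      {k : ℕ | (k : ℝ) ≤ a * n} ∪ {k : ℕ | b * n ≤ (k : ℝ)} := by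
    intro k hk
    rcases not_and_or.1 hk with h | h
    · exact Or.inl (not_le.1 h).le
    · exact Or.inr (not_le.1 h).le
  refine (measureReal_mono hsub).trans ((measureReal_union_le _ _).trans (add_le_add ?_ ?_))
  · simpa using poissonMeasure_real_le_le n ha₀ ha₁.le
  · simpa using poissonMeasure_real_ge_le n hb.le

theorem map_N_eq_poissonMeasure (M : Model d P) (n : ℕ) : P.map (M.N n) = poissonMeasure n := by
  refine Measure.ext_of_singleton fun k => ?_
  rw [Measure.map_apply (M.N_meas n) (measurableSet_singleton k), poissonMeasure_singleton]
  exact M.N_poisson n k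

theorem tendsto_measureReal_N_notMem_Icc (M : Model d P) {a b : ℝ} (ha₀ : 0 < a) (ha₁ : a < 1)
    (hb : 1 < b) :
    Tendsto (fun n : ℕ => P.real (M.N n ⁻¹' {k | a * n ≤ k ∧ k ≤ b * n}ᶜ)) atTop (nhds 0) := by
  refine (tendsto_poissonMeasure_real_compl_Icc ha₀ ha₁ hb).congr fun n => ?_
  rw [← map_N_eq_poissonMeasure M n, map_measureReal_apply (M.N_meas n) .of_discrete]

end Poisson

theorem measureReal_le_of_forall_fiber_le [IsProbabilityMeasure P] {ι : Type*} [Countable ι]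
    [MeasurableSpace ι] [MeasurableSingletonClass ι] {Z : Ω → ι} (hZ : Measurable Z) {S : Set ι}
    {A : Set Ω} {δ : ℝ} (hδ : 0 ≤ δ)
    (hA : ∀ m ∈ S, P.real {ω | Z ω = m ∧ ω ∈ A} ≤ P.real {ω | Z ω = m} * δ) :
    P.real A ≤ P.real (Z ⁻¹' Sᶜ) + δ := by
  have hfiber : ∀ m : S, P {ω | Z ω = m ∧ ω ∈ A} ≤ P {ω | Z ω = m} * ENNReal.ofReal δ :=
    fun m => by
      rw [← ENNReal.ofReal_toReal (measure_ne_top P {ω | Z ω = m}),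
        ← ENNReal.ofReal_mul ENNReal.toReal_nonneg]
      exact ENNReal.le_ofReal_iff_toReal_le (measure_ne_top _ _) (by positivity) |>.2 (hA m m.2)
  have hS : P (⋃ m : S, {ω | Z ω = m ∧ ω ∈ A}) ≤ ENNReal.ofReal δ := by
    have hdisj : Pairwise (Function.onFun Disjoint fun m : S => {ω | Z ω = m}) :=
      fun m m' hm => Set.disjoint_left.2 fun ω h h' => hm (Subtype.ext (h.symm.trans h'))
    calc P (⋃ m : S, {ω | Z ω = m ∧ ω ∈ A})
        ≤ ∑' m : S, P {ω | Z ω = m} * ENNReal.ofReal δ :=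
          (measure_iUnion_le _).trans (ENNReal.tsum_le_tsum hfiber)
      _ = P (⋃ m : S, {ω | Z ω = m}) * ENNReal.ofReal δ := by
          rw [ENNReal.tsum_mul_right,
            measure_iUnion hdisj fun m => hZ (measurableSet_singleton (m : ι))]
      _ ≤ ENNReal.ofReal δ := mul_le_of_le_one_left' prob_le_one
  have hcover : A ⊆ Z ⁻¹' Sᶜ ∪ ⋃ m : S, {ω | Z ω = m ∧ ω ∈ A} := fun ω hω => by
    by_cases h : Z ω ∈ S
    · exact Or.inr (Set.mem_iUnion.2 ⟨⟨Z ω, h⟩, rfl, hω⟩)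
    · exact Or.inl h
  calc P.real A ≤ P.real (Z ⁻¹' Sᶜ) + P.real (⋃ m : S, {ω | Z ω = m ∧ ω ∈ A}) :=
        (measureReal_mono hcover).trans (measureReal_union_le _ _)
    _ ≤ P.real (Z ⁻¹' Sᶜ) + δ := by
        gcongr
        exact ENNReal.toReal_le_of_le_ofReal hδ hS

section Asymptotics

theorem tendsto_exp_neg_mul_one_add_pow {ε B : ℝ} (hε : 0 < ε) (hB : 0 ≤ B) (K : ℕ) :
    Tendsto (fun x : ℝ => Real.exp (-(ε * x)) * (1 + B * x) ^ K) atTop (nhds 0) := by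
  have hlim : Tendsto (fun x : ℝ => ((1 + B) / ε) ^ K * ((ε * x) ^ K * Real.exp (-(ε * x))))
      atTop (nhds 0) := by
    rw [← mul_zero (((1 + B) / ε) ^ K)]
    exact ((Real.tendsto_pow_mul_exp_neg_atTop_nhds_zero K).comp
      (tendsto_id.const_mul_atTop hε)).const_mul _
  refine squeeze_zero' ?_ ?_ hlim
  · filter_upwards [eventually_ge_atTop 0] with x hx
    positivity
  · filter_upwards [eventually_ge_atTop 1] with x hx
    calc Real.exp (-(ε * x)) * (1 + B * x) ^ K ≤ Real.exp (-(ε * x)) * ((1 + B) * x) ^ K := by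
          gcongr
          linarith
      _ = ((1 + B) / ε) ^ K * ((ε * x) ^ K * Real.exp (-(ε * x))) := by
          rw [← mul_assoc, ← mul_pow, ← mul_assoc, div_mul_cancel₀ _ hε.ne', mul_comm]

theorem tendsto_mul_exp_neg_mul_one_add_pow {Q : ℕ → ℝ} {ℓ s B : ℝ} (hℓ : 0 < ℓ) (hs : ℓ < s)
    (hB : 0 ≤ B) (K : ℕ) (hQ : Tendsto (fun n : ℕ => Q n * (Real.log n / n)) atTop (nhds ℓ)) :
    Tendsto (fun n : ℕ => Q n * Real.exp (-(s * (n / Q n))) * (1 + B * (n / Q n)) ^ K) atTop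
      (nhds 0) := by
  obtain ⟨t, hℓt, hts⟩ := exists_between hs
  have ht : 0 < t := hℓ.trans hℓt
  have hlog : Tendsto (fun n : ℕ => Real.log n) atTop atTop :=
    Real.tendsto_log_atTop.comp tendsto_natCast_atTop_atTop
  have hbound : ∀ᶠ n : ℕ in atTop,
      0 < Q n ∧ Q n ≤ Real.exp (t * (n / Q n)) ∧ Real.log n / t ≤ n / Q n := by
    filter_upwards [hQ.eventually_const_lt hℓ, hQ.eventually_lt_const hℓt,
      hlog.eventually_gt_atTop t, eventually_gt_atTop 0] with n hpos hlt hlogn hn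
    have hn : (0 : ℝ) < n := by exact_mod_cast hn
    have hQn : 0 < Q n := pos_of_mul_pos_left hpos (div_pos (ht.trans hlogn) hn).le
    rw [← mul_div_assoc, div_lt_iff₀ hn] at hlt
    have hlogle : Real.log n ≤ t * (n / Q n) := by
      rw [← mul_div_assoc, le_div_iff₀ hQn, mul_comm]
      exact hlt.le
    refine ⟨hQn, ?_, (div_le_iff₀' ht).2 hlogle⟩
    calc Q n ≤ n := by nlinarith
      _ = Real.exp (Real.log n) := (Real.exp_log hn).symm
      _ ≤ Real.exp (t * (n / Q n)) := Real.exp_le_exp.2 hlogle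
  have hratio : Tendsto (fun n : ℕ => n / Q n) atTop atTop :=
    tendsto_atTop_mono' _ (hbound.mono fun n hn => hn.2.2) (hlog.atTop_div_const ht)
  refine squeeze_zero' ?_ ?_
    ((tendsto_exp_neg_mul_one_add_pow (sub_pos.2 hts) hB K).comp hratio)
  · filter_upwards [hbound] with n ⟨hQn, _⟩
    positivity
  · filter_upwards [hbound] with n ⟨hQn, hQexp, _⟩
    calc Q n * Real.exp (-(s * (n / Q n))) * (1 + B * (n / Q n)) ^ K
        ≤ Real.exp (t * (n / Q n)) * Real.exp (-(s * (n / Q n))) * (1 + B * (n / Q n)) ^ K := by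
          gcongr
      _ = Real.exp (-((s - t) * (n / Q n))) * (1 + B * (n / Q n)) ^ K := by
          rw [← Real.exp_add]
          ring_nf

theorem mul_exp_neg_mul_one_add_pow_le {Q σ V a b x m : ℝ} (K : ℕ) (hQ : 1 ≤ Q) (hσ : 0 ≤ σ)
    (hV : 0 ≤ V) (hm : 0 ≤ m) (ham : a * x ≤ m) (hmb : m ≤ b * x) :
    Q * Real.exp (-(σ / Q * (m - K))) * (1 + m * (V / Q)) ^ K ≤
      Real.exp (σ * K) * (Q * Real.exp (-(a * σ * (x / Q))) * (1 + b * V * (x / Q)) ^ K) := by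
  have hexp : -(σ / Q * (m - K)) ≤ σ * K + -(a * σ * (x / Q)) := by
    have hK : σ / Q * K ≤ σ * K := by
      gcongr
      exact div_le_self hσ hQ
    have hx : σ / Q * (a * x) ≤ σ / Q * m := by gcongr
    have hcomm : σ / Q * (a * x) = a * σ * (x / Q) := by ring
    linarith
  have hpoly : m * (V / Q) ≤ b * V * (x / Q) := by
    calc m * (V / Q) ≤ b * x * (V / Q) := by gcongr
      _ = b * V * (x / Q) := by ring
  calc Q * Real.exp (-(σ / Q * (m - K))) * (1 + m * (V / Q)) ^ K
      ≤ Q * Real.exp (σ * K + -(a * σ * (x / Q))) * (1 + b * V * (x / Q)) ^ K := by gcongr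
    _ = _ := by
      rw [Real.exp_add]
      ring

end Asymptotics

section Scales

/-- The number of cells per side of the subdivision of the torus at scale `s`: at least `1 / s`,
and with no prime factor up to `W`. -/
def cellCount (W : ℕ) (s : ℝ) : ℕ := W.factorial * ⌈1 / (s * W.factorial)⌉₊ + 1

theorem lt_of_prime_dvd_cellCount {W l : ℕ} {s : ℝ} (hl : l.Prime) (h : l ∣ cellCount W s) :
    W < l := by
  by_contra! hle
  have hfac : l ∣ W.factorial := hl.dvd_factorial.2 hle
  exact hl.one_lt.ne' (Nat.dvd_one.1 ((Nat.dvd_add_right (hfac.mul_right _)).1 h))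

theorem one_le_mul_cellCount (W : ℕ) {s : ℝ} (hs : 0 < s) : 1 ≤ s * cellCount W s := by
  have hceil := (div_le_iff₀ (by positivity)).1 (Nat.le_ceil (1 / (s * W.factorial)))
  rw [cellCount]
  push_cast
  linarith

theorem one_lt_cellCount (W : ℕ) {s : ℝ} (hs₀ : 0 < s) (hs₁ : s < 1) : 1 < cellCount W s := by
  by_contra! h
  have hle : (cellCount W s : ℝ) ≤ 1 := by exact_mod_cast h
  nlinarith [one_le_mul_cellCount W hs₀]

theorem mul_cellCount_le (W : ℕ) {s : ℝ} (hs : 0 < s) :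
    s * cellCount W s ≤ 1 + s * (W.factorial + 1) := by
  have hfac : 0 < s * W.factorial := by positivity
  have hceil := mul_lt_mul_of_pos_left
    (Nat.ceil_lt_add_one (a := 1 / (s * W.factorial)) (by positivity)) hfac
  rw [mul_add, mul_one_div_cancel hfac.ne'] at hceil
  rw [cellCount]
  push_cast
  linarith

theorem tendsto_mul_cellCount (W : ℕ) :
    Tendsto (fun s => s * cellCount W s) (nhdsWithin 0 (Ioi 0)) (nhds 1) := by
  have hupper : Tendsto (fun s : ℝ => 1 + s * (W.factorial + 1)) (nhdsWithin 0 (Ioi 0))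
      (nhds 1) := by
    refine (Continuous.tendsto' (by fun_prop) 0 1 ?_).mono_left nhdsWithin_le_nhds
    rw [zero_mul, add_zero]
  refine tendsto_of_tendsto_of_tendsto_of_le_of_le' tendsto_const_nhds hupper ?_ ?_
  · filter_upwards [self_mem_nhdsWithin] with s hs using one_le_mul_cellCount W hs
  · filter_upwards [self_mem_nhdsWithin] with s hs using mul_cellCount_le W hs

theorem tendsto_cellCount_pow_mul (W : ℕ) {s : ℕ → ℝ} {ℓ : ℝ}
    (hs : Tendsto s atTop (nhdsWithin 0 (Ioi 0)))
    (hℓ : Tendsto (fun n : ℕ => Real.log n / (n * s n ^ d)) atTop (nhds ℓ)) :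
    Tendsto (fun n : ℕ => (cellCount W (s n) : ℝ) ^ d * (Real.log n / n)) atTop (nhds ℓ) := by
  have h := (((tendsto_mul_cellCount W).comp hs).pow d).mul hℓ
  rw [one_pow, one_mul] at h
  refine h.congr' ?_
  filter_upwards [hs.eventually self_mem_nhdsWithin] with n hn
  have : s n ≠ 0 := (mem_Ioi.1 hn).ne'
  simp only [Function.comp_apply, mul_pow]
  field_simp

end Scales

section Supercritical

theorem exists_measureReal_not_connectedGraph_le (hd : 2 ≤ d) (M : Model d P) {η : ℝ} {D : ℕ}
    (hη : 0 ≤ η) (hD : 1 ≤ D) (hp : 0 < M.g (η * (√d + √d))) {σ : ℝ}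
    (hσ : σ = ∑ z ∈ (box d D).erase 0, latticeKernel M.g η D z) :
    ∃ (C V : ℝ) (K W : ℕ), 0 ≤ C ∧ 0 ≤ V ∧ ∀ {q n : ℕ} {r : ℝ} (m : ℕ), 1 < q →
      (∀ l, l.Prime → l ∣ q → W < l) → 0 < r → 1 ≤ η * r * q →
      P.real {ω | M.N n ω = m ∧ ¬ connectedGraph M n r ω} ≤ P.real {ω | M.N n ω = m} *
        (C * ((q : ℝ) ^ d * Real.exp (-(σ / (q : ℝ) ^ d * (m - K))) *
          (1 + m * (V / (q : ℝ) ^ d)) ^ K)) := by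
  obtain ⟨J, hJ⟩ := exists_nat_ge (σ / M.g (η * (√d + √d)) ^ 2)
  set K := J * J + 2 * J
  set w := J * J * D + 3 * J
  refine ⟨1 + 2 ^ (2 * w + 1) ^ d * 2 ^ (K * J), (2 * (w + D) + 1) ^ d, K, K + (2 * D + 1) ^ d,
    by positivity, by positivity, fun {q n r} m hq₁ hq hr hside => ?_⟩
  have : NeZero q := ⟨by omega⟩
  have hlarge : K + (2 * D + 1) ^ d < q :=
    (hq _ (Nat.minFac_prime hq₁.ne') q.minFac_dvd).trans_le (Nat.minFac_le (by omega))
  have hpow : 2 * D + 1 ≤ (2 * D + 1) ^ d := Nat.le_self_pow (by omega) _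
  have hκ := isCellKernel_torusKernel (d := d) (q := q) M.g_mem M.g_antitone hη hD (by omega)
  exact hκ.measureReal_not_connectedGraph_le M isEquitable_label hd
    (fun ω i hi j hj hij h => h.adj hr hη hside hij hi hj) m hp
    (hσ ▸ Finset.sum_nonneg fun z _ => (latticeKernel_mem_Icc M.g_mem hη z).1)
    (hσ ▸ sum_latticeKernel_le_sum_torusKernel M.g_mem hη (by omega))
    ((div_le_iff₀ (by positivity)).1 hJ) le_rfl (by omega) (fun l hl h => (hq l hl h).le) le_rfl

theorem measureReal_le_of_forall_fiber_le_mul_exp [IsProbabilityMeasure P] {Z : Ω → ℕ}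
    (hZ : Measurable Z) {A : Set Ω} {Q σ C V a b x : ℝ} (K : ℕ) (hQ : 1 ≤ Q) (hσ : 0 ≤ σ)
    (hV : 0 ≤ V) (hC : 0 ≤ C) (hb : 0 ≤ b) (hx : 0 ≤ x)
    (hA : ∀ m : ℕ, P.real {ω | Z ω = m ∧ ω ∈ A} ≤ P.real {ω | Z ω = m} *
      (C * (Q * Real.exp (-(σ / Q * (m - K))) * (1 + m * (V / Q)) ^ K))) :
    P.real A ≤ P.real (Z ⁻¹' {m | a * x ≤ m ∧ m ≤ b * x}ᶜ) + C * (Real.exp (σ * K) *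
      (Q * Real.exp (-(a * σ * (x / Q))) * (1 + b * V * (x / Q)) ^ K)) := by
  refine measureReal_le_of_forall_fiber_le hZ (by positivity) fun m ⟨ham, hmb⟩ => (hA m).trans ?_
  exact mul_le_mul_of_nonneg_left (mul_le_mul_of_nonneg_left
    (mul_exp_neg_mul_one_add_pow_le K hQ hσ hV m.cast_nonneg ham hmb) hC) measureReal_nonneg

theorem tendsto_measureReal_not_connectedGraph (hd : 2 ≤ d) (M : Model d P)
    {r : ℕ → ℝ} {ℓ : ℝ} (hℓ₀ : 0 < ℓ) (hℓ : ℓ < M.α)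
    (hr : Tendsto r atTop (nhdsWithin 0 (Ioi 0)))
    (hlim : Tendsto (fun n : ℕ => Real.log n / (n * r n ^ d)) atTop (nhds ℓ)) :
    Tendsto (fun n : ℕ => P.real {ω | ¬ connectedGraph M n (r n) ω}) atTop (nhds 0) := by
  have hP : IsProbabilityMeasure P := M.U_indep.isProbabilityMeasure
  have : NeZero d := ⟨by omega⟩
  obtain ⟨η, hη, D, hD, hp, hmass⟩ := exists_lt_sum_latticeKernel M.g_antitone M.g_mem
    M.g_integrable hℓ₀.le (M.α_def ▸ hℓ)
  set σ := ∑ z ∈ (box d D).erase 0, latticeKernel M.g η D z with hσ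
  have hσpos : 0 < σ := pos_of_mul_pos_right (hℓ₀.trans hmass) (by positivity)
  obtain ⟨a, haσ, ha₁⟩ := exists_between
    ((div_lt_one hσpos).2 ((div_lt_iff₀' (pow_pos hη d)).2 hmass))
  have ha₀ : 0 < a := lt_trans (by positivity) haσ
  obtain ⟨C, V, K, W, hC, hV, hfail⟩ :=
    exists_measureReal_not_connectedGraph_le hd M hη.le hD hp hσ
  have hs : Tendsto (fun n => η * r n) atTop (nhdsWithin 0 (Ioi 0)) := by
    simpa only [mul_zero] using TendstoNhdsWithinIoi.const_mul hη hr
  set Q : ℕ → ℝ := fun n => (cellCount W (η * r n) : ℝ) ^ d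
  have hQ : Tendsto (fun n : ℕ => Q n * (Real.log n / n)) atTop (nhds (ℓ / η ^ d)) := by
    refine tendsto_cellCount_pow_mul W hs ((hlim.div_const (η ^ d)).congr fun n => ?_)
    rw [mul_pow, div_div, mul_assoc, mul_comm (r n ^ d)]
  have herror := ((tendsto_mul_exp_neg_mul_one_add_pow (B := 2 * V) (by positivity)
    ((div_lt_iff₀ hσpos).1 haσ) (by positivity) K hQ).const_mul (Real.exp (σ * K))).const_mul C
  have hbound := (tendsto_measureReal_N_notMem_Icc M ha₀ ha₁ one_lt_two).add herror
  simp only [mul_zero, add_zero] at hbound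
  refine squeeze_zero' (Eventually.of_forall fun _ => measureReal_nonneg) ?_ hbound
  filter_upwards [hr.eventually self_mem_nhdsWithin, hs.eventually (Ioo_mem_nhdsGT one_pos)]
    with n hrn ⟨hs₀, hs₁⟩
  have hq := one_lt_cellCount W hs₀ hs₁
  have hQn : 1 ≤ Q n := one_le_pow₀ (by exact_mod_cast hq.le)
  exact measureReal_le_of_forall_fiber_le_mul_exp (M.N_meas n) K hQn hσpos.le hV hC two_pos.le
    n.cast_nonneg fun m =>
      hfail m hq (fun l => lt_of_prime_dvd_cellCount) hrn (one_le_mul_cellCount W hs₀)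

theorem tendsto_measureReal_connectedGraph (hd : 2 ≤ d) (M : Model d P)
    {r : ℕ → ℝ} {ℓ : ℝ} (hℓ₀ : 0 < ℓ) (hℓ : ℓ < M.α)
    (hr : Tendsto r atTop (nhdsWithin 0 (Ioi 0)))
    (hlim : Tendsto (fun n : ℕ => Real.log n / (n * r n ^ d)) atTop (nhds ℓ)) :
    Tendsto (fun n : ℕ => P.real {ω | connectedGraph M n (r n) ω}) atTop (nhds 1) := by
  have hP : IsProbabilityMeasure P := M.U_indep.isProbabilityMeasure
  have h := (tendsto_measureReal_not_connectedGraph hd M hℓ₀ hℓ hr hlim).const_sub 1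
  rw [sub_zero] at h
  refine tendsto_of_tendsto_of_tendsto_of_le_of_le h tendsto_const_nhds (fun n => ?_)
    fun n => measureReal_le_one
  have hunion := measureReal_union_le (μ := P) {ω | connectedGraph M n (r n) ω}
    {ω | connectedGraph M n (r n) ω}ᶜ
  rw [Set.union_compl_self, probReal_univ] at hunion
  exact sub_le_iff_le_add.2 hunion

theorem rhat_pow (hd : d ≠ 0) (M : Model d P) {γ : ℝ} (hγ : 0 ≤ γ) (n : ℕ) :
    rhat M γ n ^ d = γ * Real.log n / (M.α * n) := by
  have hα := M.α_pos
  have := Real.log_natCast_nonneg n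
  rw [rhat, one_div, Real.rpow_inv_natCast_pow (by positivity) hd]

theorem rhat_pos (M : Model d P) {γ : ℝ} (hγ : 0 < γ) {n : ℕ} (hn : 1 < n) :
    0 < rhat M γ n := by
  have hα := M.α_pos
  have hlog : 0 < Real.log n := Real.log_pos (by exact_mod_cast hn)
  exact Real.rpow_pos_of_pos (by positivity) _

theorem tendsto_rhat (hd : d ≠ 0) (M : Model d P) {γ : ℝ} (hγ : 0 < γ) :
    Tendsto (rhat M γ) atTop (nhdsWithin 0 (Ioi 0)) := by
  refine tendsto_nhdsWithin_iff.2 ⟨?_, (eventually_gt_atTop 1).mono fun n => rhat_pos M hγ⟩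
  have hbase : Tendsto (fun n : ℕ => γ * Real.log n / (M.α * n)) atTop (nhds 0) := by
    have h := (Real.isLittleO_log_id_atTop.tendsto_div_nhds_zero.comp
      tendsto_natCast_atTop_atTop).const_mul (γ / M.α)
    rw [mul_zero] at h
    exact h.congr fun n => div_mul_div_comm _ _ _ _
  have hd' : (0 : ℝ) < 1 / d := by positivity
  have h := hbase.rpow_const (p := (1 : ℝ) / d) (Or.inr hd'.le)
  rwa [Real.zero_rpow hd'.ne'] at h

theorem tendsto_log_div_mul_rhat_pow (hd : d ≠ 0) (M : Model d P) {γ : ℝ} (hγ : 0 < γ) :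
    Tendsto (fun n : ℕ => Real.log n / (n * rhat M γ n ^ d)) atTop (nhds (M.α / γ)) := by
  refine tendsto_const_nhds.congr' ?_
  filter_upwards [eventually_gt_atTop 1] with n hn
  have hα := M.α_pos
  have hlog : 0 < Real.log n := Real.log_pos (by exact_mod_cast hn)
  rw [rhat_pow hd M hγ.le]
  field_simp

end Supercritical

theorem nonempty_threshold [NeZero d] (M : Model d P) {θ : ℝ} (hθ : 0 < θ) :
    {x : ℝ | 0 < x ∧ 1 < x * M.g (M.α / (x * θ))}.Nonempty := by
  have hα := M.α_pos
  obtain ⟨s, hs, hgs⟩ := exists_pos_of_integral_norm_pos (M.α_def ▸ hα)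
  set x := max (M.α / (s * θ)) (2 / M.g s)
  have hx : 0 < x := lt_max_of_lt_right (by positivity)
  have hle : M.α / (x * θ) ≤ s := by
    have h := (div_le_iff₀ (by positivity)).1 (le_max_left (M.α / (s * θ)) (2 / M.g s))
    rw [div_le_iff₀ (by positivity)]
    linarith
  refine ⟨x, hx, ?_⟩
  calc (1 : ℝ) < 2 := one_lt_two
    _ ≤ x * M.g s := (div_le_iff₀ hgs).1 (le_max_right _ _)
    _ ≤ x * M.g (M.α / (x * θ)) := by
        gcongr
        exact M.g_antitone (mem_Ici.2 (by positivity)) (mem_Ici.2 hs.le) hle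

theorem one_le_sInf_threshold [NeZero d] (M : Model d P) {θ : ℝ} (hθ : 0 < θ) :
    1 ≤ sInf {x : ℝ | 0 < x ∧ 1 < x * M.g (M.α / (x * θ))} := by
  refine le_csInf (nonempty_threshold M hθ) fun x ⟨hx, hgx⟩ => ?_
  have hα := M.α_pos
  exact hgx.le.trans (mul_le_of_le_one_right hx.le (M.g_mem _ (by positivity)).2)

theorem connected_whp_general (hd : 2 ≤ d) (M : Model d P) {γ : ℝ} (hγ : 1 < γ) :
    Tendsto (fun n : ℕ => (P {ω | connectedGraph M n (rhat M γ n) ω}).toReal)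
      atTop (nhds 1) := by
  have hd₀ : d ≠ 0 := by omega
  have hγ₀ : 0 < γ := one_pos.trans hγ
  exact tendsto_measureReal_connectedGraph hd M (div_pos M.α_pos hγ₀) (div_lt_self M.α_pos hγ)
    (tendsto_rhat hd₀ M hγ₀) (tendsto_log_div_mul_rhat_pow hd₀ M hγ₀)

/-- Theorem 2: for `γ > β`, `G_n(r̂_n(γ))` is connected with high probability. -/
theorem connected_whp (hd : 2 ≤ d) [IsProbabilityMeasure P] (M : Model d P)
    {c : ℝ} (hc : (d : ℝ) < c)
    (hg : M.g =o[atTop] fun r : ℝ => r ^ (-c))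
    (θ : ℝ) (hθ : θ = (volume (Metric.ball (0 : EuclideanSpace ℝ (Fin d)) 1)).toReal)
    (β : ℝ) (hβ : β = sInf {x : ℝ | 0 < x ∧ 1 < x * M.g (M.α / (x * θ))})
    {γ : ℝ} (hγ : β < γ) :
    Tendsto (fun n : ℕ => (P {ω | connectedGraph M n (rhat M γ n) ω}).toReal)
      atTop (nhds 1) := by
  have : NeZero d := ⟨by omega⟩
  have hθpos : 0 < θ :=
    hθ ▸ ENNReal.toReal_pos (Metric.measure_ball_pos volume _ one_pos).ne' measure_ball_lt_top.ne
  exact connected_whp_general hd M ((hβ ▸ one_le_sInf_threshold M hθpos).trans_lt hγ)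

end RCM
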